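/- arXiv:1606.07573 — 11 statements merged into one kernel-verified Lean document; each statement's English description precedes it below -/
import Mathlib

section
/- Let B = ℓ²(ℕ;ℝ), let S : B → B be the right shift ((Su)₀ = 0 and (Su)_{n+1} = u_n), let (m_n)_{n∈ℕ} be a nonincreasing sequence of real numbers with m₁ ≤ 2 and m_n → 1 as n → ∞, let M : B → B be the multiplication operator (Mu)_n = m_n u_n, and for p > 0 define 𝓕(u) = (1 − ‖u‖^p) · (MS)u. Then the origin u = 0 is a stable fixed point of the iteration u_{n+1} = 𝓕(u_n): for every ε ∈ (0,1) there exists δ > 0 such that every solution with ‖u₀‖ ≤ δ satisfies ‖u_n‖ < ε for all n ∈ ℕ. -/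
/-!
Up to scalars, `u n` is `(MS)ⁿ (u 0)`, whose first `n` coordinates vanish. There `MS` expands by at
most `sup_{k > n} |m k|`, whose limit is at most `1`. Given a small `η > 0`, for all large `n` the
damping factor therefore makes the norm nonincreasing whenever it is at least `η`. The finitely many
earlier steps, and each single step starting below `η`, multiply the norm by at most a fixed
constant, which is absorbed in the choice of `δ` and `η`.
-/

open Filter
open scoped ENNReal

theorem lt_of_growth_of_eventually_decay {r : ℕ → ℝ} {C η ε : ℝ} {N : ℕ}
    (hr : ∀ n, 0 ≤ r n) (hC : 1 ≤ C) (hη : C * η < ε)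
    (growth : ∀ n, r n < ε → r (n + 1) ≤ C * r n)
    (decay : ∀ n ≥ N, η ≤ r n → r n < ε → r (n + 1) ≤ r n)
    (h0 : C ^ N * r 0 ≤ η) (n : ℕ) : r n < ε := by
  have hC0 : 0 ≤ C := zero_le_one.trans hC
  have hη0 : 0 ≤ η := (mul_nonneg (pow_nonneg hC0 N) (hr 0)).trans h0
  have hηC : η ≤ C * η := le_mul_of_one_le_left hη0 hC
  have pow_bound {k : ℕ} (hk : k ≤ N) : C ^ k * r 0 ≤ η :=
    (mul_le_mul_of_nonneg_right (pow_le_pow_right₀ hC hk) (hr 0)).trans h0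
  have early : ∀ k ≤ N, r k ≤ C ^ k * r 0 := by
    intro k hk
    induction k with
    | zero => simp
    | succ k ih =>
      have ih := ih (by omega)
      have hlt : r k < ε := by linarith [pow_bound (Nat.le_of_succ_le hk)]
      calc r (k + 1) ≤ C * r k := growth k hlt
        _ ≤ C * (C ^ k * r 0) := by gcongr
        _ = C ^ (k + 1) * r 0 := by ring
  have late : ∀ k ≥ N, r k ≤ C * η := by
    intro k hk
    induction k, hk using Nat.le_induction with
    | base => exact (early N le_rfl).trans (h0.trans hηC)
    | succ k hk ih =>
      have hlt : r k < ε := ih.trans_lt hη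
      rcases le_total (r k) η with hsmall | hlarge
      · exact (growth k hlt).trans (mul_le_mul_of_nonneg_left hsmall hC0)
      · exact (decay k hk hlarge hlt).trans ih
  rcases le_total n N with hn | hn
  · linarith [early n hn, pow_bound hn]
  · exact (late n hn).trans_lt hη

/-- Lyapunov stability of the point `x₀` under iteration of `F`. Taking the orbit of `x₀` itself
shows that such a point of a metric space is fixed by `F`. -/
def IsLyapunovStable {X : Type*} [PseudoMetricSpace X] (F : X → X) (x₀ : X) : Prop :=
  ∀ ε > 0, ∃ δ > 0, ∀ u : ℕ → X,
    (∀ n, u (n + 1) = F (u n)) → dist (u 0) x₀ ≤ δ → ∀ n, dist (u n) x₀ < ε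

section DampedMap

variable {X : Type*} [SeminormedAddCommGroup X] [NormedSpace ℝ X]

/-- The map `𝓕(u) = (1 - ‖u‖ ^ p) • L u`, a linear map with nonlinear damping of order `p`. -/
noncomputable def dampedMap (p : ℝ) (L : X →L[ℝ] X) (u : X) : X := (1 - ‖u‖ ^ p) • L u

variable {p : ℝ} {L : X →L[ℝ] X}

theorem norm_dampedMap (hp : 0 ≤ p) {u : X} (hu : ‖u‖ ≤ 1) :
    ‖dampedMap p L u‖ = (1 - ‖u‖ ^ p) * ‖L u‖ := by
  have hdamp : 0 ≤ 1 - ‖u‖ ^ p := sub_nonneg.mpr (Real.rpow_le_one (norm_nonneg u) hu hp)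
  rw [dampedMap, norm_smul, Real.norm_of_nonneg hdamp]

theorem norm_dampedMap_le (hp : 0 ≤ p) {u : X} (hu : ‖u‖ ≤ 1) : ‖dampedMap p L u‖ ≤ ‖L u‖ := by
  rw [norm_dampedMap hp hu]
  exact mul_le_of_le_one_left (norm_nonneg _)
    (sub_le_self _ (Real.rpow_nonneg (norm_nonneg u) p))

theorem norm_dampedMap_le_norm_self (hp : 0 ≤ p) {η : ℝ} (hη : 0 ≤ η) {u : X} (hηu : η ≤ ‖u‖)
    (hu : ‖u‖ ≤ 1) (hL : (1 - η ^ p) * ‖L u‖ ≤ ‖u‖) : ‖dampedMap p L u‖ ≤ ‖u‖ := by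
  rw [norm_dampedMap hp hu]
  exact le_trans (by gcongr) hL

theorem exists_smul_pow_eq_of_dampedMap {u : ℕ → X} (hu : ∀ n, u (n + 1) = dampedMap p L (u n))
    (n : ℕ) : ∃ c : ℝ, u n = c • (L ^ n) (u 0) := by
  induction n with
  | zero => exact ⟨1, by simp⟩
  | succ n ih =>
    obtain ⟨c, hc⟩ := ih
    refine ⟨(1 - ‖u n‖ ^ p) * c, ?_⟩
    rw [hu, dampedMap, mul_smul, pow_succ', mul_apply_eq_comp, ← map_smul L c, ← hc]

theorem isLyapunovStable_dampedMap (hp : 0 < p)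
    (hL : ∀ θ > 1, ∀ᶠ n in atTop, ∀ v, ‖(L ^ (n + 1)) v‖ ≤ θ * ‖(L ^ n) v‖) :
    IsLyapunovStable (dampedMap p L) 0 := by
  intro ε hε
  set C := max 1 ‖L‖
  have hC : 1 ≤ C := le_max_left _ _
  obtain ⟨η, hη0, hη⟩ : ∃ η > 0, C * η < min ε 1 := exists_pos_mul_lt (lt_min hε one_pos) C
  have hη1 : η < 1 :=
    (le_mul_of_one_le_left hη0.le hC).trans_lt (hη.trans_le (min_le_right _ _))
  have hdamp_pos : 0 < 1 - η ^ p := sub_pos.mpr (Real.rpow_lt_one hη0.le hη1 hp)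
  have hdamp_lt : 1 - η ^ p < 1 := sub_lt_self 1 (Real.rpow_pos_of_pos hη0 p)
  obtain ⟨N, hN⟩ := eventually_atTop.mp (hL _ ((one_lt_inv₀ hdamp_pos).mpr hdamp_lt))
  refine ⟨η / C ^ N, by positivity, fun u hu h0 n => ?_⟩
  simp only [dist_zero_right] at h0 ⊢
  have norm_le_one {k : ℕ} (hk : ‖u k‖ < min ε 1) : ‖u k‖ ≤ 1 := hk.le.trans (min_le_right _ _)
  refine (lt_of_growth_of_eventually_decay (r := fun k => ‖u k‖) (fun k => norm_nonneg _) hC hη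
    (fun k hk => ?growth) (fun k hkN hηk hk => ?decay)
    ((le_div_iff₀' (by positivity)).mp h0) n).trans_le (min_le_left _ _)
  case growth =>
    calc ‖u (k + 1)‖ ≤ ‖L (u k)‖ := hu k ▸ norm_dampedMap_le hp.le (norm_le_one hk)
      _ ≤ C * ‖u k‖ := L.le_of_opNorm_le (le_max_right _ _) _
  case decay =>
    obtain ⟨c, hc⟩ := exists_smul_pow_eq_of_dampedMap hu k
    have hexp : ‖L (u k)‖ ≤ (1 - η ^ p)⁻¹ * ‖u k‖ := by
      rw [hc, map_smul, norm_smul, norm_smul, mul_left_comm, ← mul_apply_eq_comp, ← pow_succ']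
      exact mul_le_mul_of_nonneg_left (hN k hkN _) (norm_nonneg c)
    exact (hu k).symm ▸ norm_dampedMap_le_norm_self hp.le hη0.le hηk (norm_le_one hk)
      ((le_inv_mul_iff₀ hdamp_pos).mp hexp)

end DampedMap

theorem lp_norm_le_mul_norm {ι : Type*} {E : ι → Type*} [∀ i, NormedAddCommGroup (E i)]
    [∀ i, NormedSpace ℝ (E i)] {q : ℝ≥0∞} (hq : q ≠ 0) {v w : lp E q} {c : ℝ} (hc : 0 ≤ c)
    (h : ∀ i, ‖w i‖ ≤ c * ‖v i‖) : ‖w‖ ≤ c * ‖v‖ :=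
  calc ‖w‖ ≤ ‖c • v‖ := lp.norm_mono hq fun i => by
        simpa [norm_smul, abs_of_nonneg hc] using h i
    _ = c * ‖v‖ := by rw [lp.norm_const_smul hq, Real.norm_of_nonneg hc]

theorem lp_norm_eq_of_shift {E : Type*} [NormedAddCommGroup E] {q : ℝ≥0∞} (hq : q ≠ 0)
    {u w : lp (fun _ : ℕ => E) q} (hw0 : w 0 = 0) (hw : ∀ n, w (n + 1) = u n) : ‖w‖ = ‖u‖ := by
  rcases q.trichotomy with rfl | rfl | hq_pos
  · exact absurd rfl hq
  · refine le_antisymm (lp.norm_le_of_forall_le (norm_nonneg u) ?_)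
      (lp.norm_le_of_forall_le (norm_nonneg w) fun n => hw n ▸ lp.norm_apply_le_norm hq w _)
    rintro (_ | n)
    · simp [hw0]
    · exact hw n ▸ lp.norm_apply_le_norm hq u n
  · rw [lp.norm_eq_tsum_rpow hq_pos, lp.norm_eq_tsum_rpow hq_pos,
      ((lp.memℓp w).summable hq_pos).tsum_eq_zero_add]
    simp [hw0, hw, Real.zero_rpow hq_pos.ne']

section WeightedShift

variable {E : Type*} [NormedAddCommGroup E] [NormedSpace ℝ E] {q : ℝ≥0∞} [Fact (1 ≤ q)]
  {m : ℕ → ℝ} {S M : lp (fun _ : ℕ => E) q →L[ℝ] lp (fun _ : ℕ => E) q}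

theorem weightedShift_pow_apply_eq_zero (hS0 : ∀ u, S u 0 = 0) (hS : ∀ u n, S u (n + 1) = u n)
    (hM : ∀ u n, M u n = m n • u n) (u : lp (fun _ : ℕ => E) q) {n k : ℕ} (hk : k < n) :
    ((M ∘L S) ^ n) u k = 0 := by
  induction n generalizing k with
  | zero => omega
  | succ n ih =>
    rw [pow_succ', mul_apply_eq_comp, ContinuousLinearMap.comp_apply, hM]
    cases k with
    | zero => rw [hS0, smul_zero]
    | succ k => rw [hS, ih (by omega), smul_zero]

theorem norm_weightedShift_le (hS0 : ∀ u, S u 0 = 0) (hS : ∀ u n, S u (n + 1) = u n)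
    (hM : ∀ u n, M u n = m n • u n) {u : lp (fun _ : ℕ => E) q} {c : ℝ} (hc : 0 ≤ c) {n : ℕ}
    (hu : ∀ k < n, u k = 0) (hm : ∀ k > n, |m k| ≤ c) : ‖M (S u)‖ ≤ c * ‖u‖ := by
  have hq : q ≠ 0 := (zero_lt_one.trans_le Fact.out).ne'
  rw [← lp_norm_eq_of_shift hq (hS0 u) (hS u)]
  refine lp_norm_le_mul_norm hq hc ?_
  rintro (_ | k)
  · simp [hM, hS0]
  · rw [hM, hS, norm_smul, Real.norm_eq_abs]
    rcases lt_or_ge k n with hk | hk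
    · simp [hu k hk]
    · gcongr
      exact hm (k + 1) (by omega)

/-- `hm` says `limsup |m n| ≤ 1`, avoiding the junk value of a real `limsup` on unbounded
sequences. -/
theorem stmt_0_general (hS0 : ∀ u, S u 0 = 0) (hS : ∀ u n, S u (n + 1) = u n)
    (hM : ∀ u n, M u n = m n • u n) (hm : ∀ θ > 1, ∀ᶠ n in atTop, |m n| ≤ θ) {p : ℝ}
    (hp : 0 < p) : IsLyapunovStable (dampedMap p (M ∘L S)) 0 := by
  refine isLyapunovStable_dampedMap hp fun θ hθ => ?_
  filter_upwards [eventually_forall_ge_atTop.mpr (hm θ hθ)] with n hn v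
  rw [pow_succ']
  exact norm_weightedShift_le hS0 hS hM (zero_le_one.trans hθ.le)
    (fun k => weightedShift_pow_apply_eq_zero hS0 hS hM v) fun k hk => hn k hk.le

end WeightedShift

/-- nonlinear stabilization of the map `𝓕(u) = (1 - ‖u‖^p) • (MS)u`
on `B = ℓ²(ℕ;ℝ)`: the origin is a Lyapunov-stable fixed point of the iteration. -/
theorem stmt_0 (m : ℕ → ℝ) (hm_anti : Antitone m) (hm1 : m 1 ≤ 2)
    (hm_lim : Filter.Tendsto m Filter.atTop (nhds 1))
    (S M : lp (fun _ : ℕ => ℝ) 2 →L[ℝ] lp (fun _ : ℕ => ℝ) 2)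
    (hS0 : ∀ u : lp (fun _ : ℕ => ℝ) 2, S u 0 = 0)
    (hS : ∀ (u : lp (fun _ : ℕ => ℝ) 2) (n : ℕ), S u (n + 1) = u n)
    (hM : ∀ (u : lp (fun _ : ℕ => ℝ) 2) (n : ℕ), M u n = m n * u n)
    (p : ℝ) (hp : 0 < p)
    (F : lp (fun _ : ℕ => ℝ) 2 → lp (fun _ : ℕ => ℝ) 2)
    (hF : ∀ u, F u = (1 - ‖u‖ ^ p) • M (S u)) :
    ∀ ε ∈ Set.Ioo (0 : ℝ) 1, ∃ δ > 0, ∀ u : ℕ → lp (fun _ : ℕ => ℝ) 2,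
      (∀ n, u (n + 1) = F (u n)) → ‖u 0‖ ≤ δ → ∀ n, ‖u n‖ < ε := by
  obtain rfl : F = dampedMap p (M ∘L S) := funext hF
  have hm (θ : ℝ) (hθ : θ > 1) : ∀ᶠ n in atTop, |m n| ≤ θ :=
    hm_lim.abs.eventually_le_const (by simpa using hθ)
  exact fun ε hε => by simpa only [dist_zero_right] using stmt_0_general hS0 hS hM hm hp ε hε.1
end

section
/- Let B = ℓ²(ℕ;ℝ), let S be the right shift, let (m_n) be a nonincreasing sequence of real numbers with m_n → 1 as n → ∞, and let M be the associated multiplication operator. Then the spectral radius of the bounded linear operator MS on B is equal to 1. -/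
/-!
On `ℓᵖ`, the `n`-th power of the weighted shift `T eₖ = wₖ eₖ₊₁` sends `eₖ` to
`wₖ wₖ₊₁ ⋯ wₖ₊ₙ₋₁ eₖ₊ₙ`. If `‖wₖ‖ → r`, letting `k → ∞` gives `rⁿ ≤ ‖Tⁿ‖`. Conversely, let
`a` be an antitone majorant of `‖w‖` with the same limit. Then `‖Tⁿ‖ ≤ a₀ ⋯ aₙ₋₁`, whose `n`-th
root is, by AM-GM, at most a Cesàro mean of `a`, and these means tend to `r`.
-/

open Filter Finset Topology

theorem exists_antitone_ge_tendsto {α : Type*} [ConditionallyCompleteLinearOrder α]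
    [DenselyOrdered α] [TopologicalSpace α] [OrderTopology α] {c : ℕ → α} {r : α}
    (hc : Tendsto c atTop (𝓝 r)) :
    ∃ a : ℕ → α, Antitone a ∧ c ≤ a ∧ Tendsto a atTop (𝓝 r) := by
  have hbdd (n : ℕ) : BddAbove (c '' Set.Ici n) :=
    hc.bddAbove_range.mono (Set.image_subset_range _ _)
  have hle : c ≤ fun n => sSup (c '' Set.Ici n) := fun n =>
    le_csSup (hbdd n) (Set.mem_image_of_mem c Set.self_mem_Ici)
  refine ⟨fun n => sSup (c '' Set.Ici n), fun m n hmn => ?_, hle, tendsto_order.2 ⟨?_, ?_⟩⟩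
  · exact csSup_le_csSup (hbdd m) (Set.nonempty_Ici.image c)
      (Set.image_mono (Set.Ici_subset_Ici.2 hmn))
  · exact fun x hx => (hc.eventually_const_lt hx).mono fun n hn => hn.trans_le (hle n)
  · intro x hx
    obtain ⟨y, hry, hyx⟩ := exists_between hx
    obtain ⟨N, hN⟩ := eventually_atTop.1 (hc.eventually_lt_const hry)
    filter_upwards [eventually_ge_atTop N] with n hn
    refine (csSup_le (Set.nonempty_Ici.image c) ?_).trans_lt hyx
    rintro _ ⟨k, hk, rfl⟩
    exact (hN k (hn.trans hk)).le

theorem prod_rpow_one_div_card_le {ι : Type*} {s : Finset ι} (hs : s.Nonempty) {a : ι → ℝ}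
    (ha : ∀ i ∈ s, 0 ≤ a i) : (∏ i ∈ s, a i) ^ (1 / #s : ℝ) ≤ (#s : ℝ)⁻¹ * ∑ i ∈ s, a i := by
  simpa [div_eq_inv_mul] using Real.geom_mean_le_arith_mean s (fun _ => 1) a
    (fun _ _ => zero_le_one) (by simpa using hs.card_pos) ha

theorem lp_norm_le_mul_norm_of_injective {ι κ F G : Type*} [NormedAddCommGroup F]
    [NormedAddCommGroup G] {p : ENNReal} (hp : p ≠ 0) {C : ℝ} (hC : 0 ≤ C) {f : ι → κ}
    (hf : f.Injective) (u : lp (fun _ : ι => F) p) (v : lp (fun _ : κ => G) p)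
    (hv : ∀ x ∉ Set.range f, v x = 0) (huv : ∀ i, ‖v (f i)‖ ≤ C * ‖u i‖) :
    ‖v‖ ≤ C * ‖u‖ := by
  have hCu : 0 ≤ C * ‖u‖ := mul_nonneg hC (lp.norm_nonneg' u)
  rcases eq_or_ne p ⊤ with rfl | hp_top
  · refine lp.norm_le_of_forall_le hCu fun x => ?_
    by_cases hx : x ∈ Set.range f
    · obtain ⟨i, rfl⟩ := hx
      exact (huv i).trans (by gcongr; exact lp.norm_apply_le_norm hp u i)
    · rwa [hv x hx, norm_zero]
  · have hp_pos : 0 < p.toReal := ENNReal.toReal_pos hp hp_top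
    have hsum : HasSum (fun i => ‖v (f i)‖ ^ p.toReal) (‖v‖ ^ p.toReal) :=
      (hf.hasSum_iff fun x hx => by rw [hv x hx, norm_zero, Real.zero_rpow hp_pos.ne']).2
        (lp.hasSum_norm hp_pos v)
    refine (Real.rpow_le_rpow_iff (lp.norm_nonneg' v) hCu hp_pos).1 ?_
    rw [Real.mul_rpow hC (lp.norm_nonneg' u)]
    refine hasSum_le (fun i => ?_) hsum ((lp.hasSum_norm hp_pos u).mul_left _)
    rw [← Real.mul_rpow hC (norm_nonneg _)]
    gcongr
    exact huv i

section WeightedShift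

variable {𝕜 F : Type*} [NontriviallyNormedField 𝕜] [NormedAddCommGroup F] [NormedSpace 𝕜 F]
  {p : ENNReal} [Fact (1 ≤ p)]

/-- `T` is the unilateral weighted shift `(u⁰, u¹, …) ↦ (0, w₀u⁰, w₁u¹, …)` on `ℓᵖ(ℕ; F)`; the
weight `w k` is indexed by the source coordinate `k`. -/
structure IsWeightedShift (w : ℕ → 𝕜)
    (T : lp (fun _ : ℕ => F) p →L[𝕜] lp (fun _ : ℕ => F) p) : Prop where
  apply_zero : ∀ u, T u 0 = 0
  apply_succ : ∀ u k, T u (k + 1) = w k • u k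

variable {w : ℕ → 𝕜} {T : lp (fun _ : ℕ => F) p →L[𝕜] lp (fun _ : ℕ => F) p}

namespace IsWeightedShift

theorem pow_apply_of_lt (hT : IsWeightedShift w T) (u : lp (fun _ : ℕ => F) p) {n k : ℕ}
    (hk : k < n) : (T ^ n) u k = 0 := by
  induction n generalizing k with
  | zero => exact absurd hk k.not_lt_zero
  | succ n ih =>
    rw [pow_succ', mul_apply_eq_comp]
    cases k with
    | zero => exact hT.apply_zero _
    | succ k => rw [hT.apply_succ, ih (Nat.lt_of_succ_lt_succ hk), smul_zero]

theorem pow_apply_add (hT : IsWeightedShift w T) (u : lp (fun _ : ℕ => F) p) (n k : ℕ) :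
    (T ^ n) u (k + n) = (∏ i ∈ range n, w (k + i)) • u k := by
  induction n with
  | zero => simp
  | succ n ih =>
    rw [pow_succ', mul_apply_eq_comp, ← add_assoc, hT.apply_succ, ih,
      prod_range_succ_comm, mul_smul]

theorem prod_norm_le_norm_pow [Nontrivial F] (hT : IsWeightedShift w T) (n k : ℕ) :
    ∏ i ∈ range n, ‖w (k + i)‖ ≤ ‖T ^ n‖ := by
  have hp : 0 < p := zero_lt_one.trans_le Fact.out
  obtain ⟨x, hx⟩ := exists_ne (0 : F)
  let e : lp (fun _ : ℕ => F) p := lp.single p k x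
  refine le_of_mul_le_mul_right ?_ (norm_pos_iff.2 hx)
  calc (∏ i ∈ range n, ‖w (k + i)‖) * ‖x‖ = ‖(T ^ n) e (k + n)‖ := by
        rw [hT.pow_apply_add, norm_smul, norm_prod]; simp [e]
    _ ≤ ‖(T ^ n) e‖ := lp.norm_apply_le_norm hp.ne' _ _
    _ ≤ ‖T ^ n‖ * ‖e‖ := (T ^ n).le_opNorm e
    _ = ‖T ^ n‖ * ‖x‖ := by rw [lp.norm_single hp]

theorem pow_le_norm_pow [Nontrivial F] (hT : IsWeightedShift w T) {r : ℝ}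
    (hw : Tendsto (fun k => ‖w k‖) atTop (𝓝 r)) (n : ℕ) : r ^ n ≤ ‖T ^ n‖ := by
  have hprod : Tendsto (fun k => ∏ i ∈ range n, ‖w (k + i)‖) atTop (𝓝 (r ^ n)) := by
    simpa using tendsto_finsetProd (range n) fun i _ => (tendsto_add_atTop_iff_nat i).2 hw
  exact le_of_tendsto' hprod (hT.prod_norm_le_norm_pow n)

theorem norm_pow_le_prod (hT : IsWeightedShift w T) {a : ℕ → ℝ} (ha : Antitone a)
    (hwa : ∀ k, ‖w k‖ ≤ a k) (n : ℕ) : ‖T ^ n‖ ≤ ∏ i ∈ range n, a i := by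
  have hprod_nonneg : 0 ≤ ∏ i ∈ range n, a i :=
    prod_nonneg fun i _ => (norm_nonneg _).trans (hwa i)
  refine (T ^ n).opNorm_le_bound hprod_nonneg fun u => ?_
  refine lp_norm_le_mul_norm_of_injective (zero_lt_one.trans_le Fact.out).ne' hprod_nonneg
    (add_left_injective n) u _ (fun k hk => hT.pow_apply_of_lt u ?_) fun k => ?_
  · by_contra! hnk
    exact hk ⟨k - n, Nat.sub_add_cancel hnk⟩
  · rw [hT.pow_apply_add, norm_smul, norm_prod]
    gcongr with i
    exact (hwa _).trans (ha (Nat.le_add_left i k))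

end IsWeightedShift

theorem stmt_2_general [Nontrivial F] (hT : IsWeightedShift w T) {r : ℝ}
    (hw : Tendsto (fun k => ‖w k‖) atTop (𝓝 r)) :
    Tendsto (fun n : ℕ => ‖T ^ n‖ ^ (1 / n : ℝ)) atTop (𝓝 r) := by
  have hr : 0 ≤ r := ge_of_tendsto' hw fun k => norm_nonneg (w k)
  obtain ⟨a, ha_anti, hwa, ha_lim⟩ := exists_antitone_ge_tendsto hw
  have ha_nonneg (i : ℕ) : 0 ≤ a i := (norm_nonneg _).trans (hwa i)
  refine tendsto_of_tendsto_of_tendsto_of_le_of_le' tendsto_const_nhds ha_lim.cesaro ?_ ?_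
  · filter_upwards [eventually_ne_atTop 0] with n hn
    calc r = (r ^ n) ^ (1 / n : ℝ) := by rw [one_div, Real.pow_rpow_inv_natCast hr hn]
      _ ≤ ‖T ^ n‖ ^ (1 / n : ℝ) := by gcongr; exact hT.pow_le_norm_pow hw n
  · filter_upwards [eventually_ne_atTop 0] with n hn
    calc ‖T ^ n‖ ^ (1 / n : ℝ) ≤ (∏ i ∈ range n, a i) ^ (1 / n : ℝ) := by
          gcongr; exact hT.norm_pow_le_prod ha_anti hwa n
      _ ≤ (n : ℝ)⁻¹ * ∑ i ∈ range n, a i := by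
          simpa using prod_rpow_one_div_card_le (nonempty_range_iff.2 hn) fun i _ => ha_nonneg i

end WeightedShift

/-- the spectral radius of `MS` on `ℓ²(ℕ;ℝ)`, computed via Gelfand's
formula `r(T) = lim ‖Tⁿ‖^{1/n}`, equals `1`. -/
theorem stmt_2 (m : ℕ → ℝ) (hm_anti : Antitone m)
    (hm_lim : Filter.Tendsto m Filter.atTop (nhds 1))
    (S M : lp (fun _ : ℕ => ℝ) 2 →L[ℝ] lp (fun _ : ℕ => ℝ) 2)
    (hS0 : ∀ u : lp (fun _ : ℕ => ℝ) 2, S u 0 = 0)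
    (hS : ∀ (u : lp (fun _ : ℕ => ℝ) 2) (n : ℕ), S u (n + 1) = u n)
    (hM : ∀ (u : lp (fun _ : ℕ => ℝ) 2) (n : ℕ), M u n = m n * u n) :
    Filter.Tendsto (fun n : ℕ => ‖(M ∘L S) ^ n‖ ^ (1 / n : ℝ))
      Filter.atTop (nhds 1) := by
  have hT : IsWeightedShift (fun k => m (k + 1)) (M ∘L S) :=
    ⟨fun u => by simp [hM, hS0], fun u k => by simp [hM, hS]⟩
  exact stmt_2_general hT (by simpa using ((tendsto_add_atTop_iff_nat 1).2 hm_lim).norm)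
end

section
/- Let B = L²(ℝ), let χ : ℝ → [0,2] be a smooth function with support contained in [−1,1] and χ(0) = 2, and let h : [0,∞) → [0,∞) be a strictly increasing continuous function with h(0) = 0. Define 𝓕 : B → B by (𝓕(u))(x) = χ(x)·u(x − h(‖u‖_{L²})). Then for every u₀ ∈ B, the sequence defined by u_{n+1} = 𝓕(u_n) satisfies ‖u_n‖_{L²} → 0 as n → ∞. -/
open MeasureTheory

/-!
Each step moves the function to the right by `h ‖uₙ‖ ≥ 0` and then cuts it off to the support of
`χ`. From `u₁` on, the left end of the support therefore moves right by at least the total shift.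
If `∑ h ‖uₙ‖` diverges, the support is eventually pushed out of that of `χ`, so `uₙ = 0`
eventually. If it converges, then `h ‖uₙ‖ → 0`, which forces `‖uₙ‖ → 0` by monotonicity of `h`.
-/

section

open Set Filter Topology

lemma tendsto_nhds_of_tendsto_comp_of_monotoneOn_Ici {ι α β : Type*}
    [LinearOrder α] [TopologicalSpace α] [OrderTopology α]
    [LinearOrder β] [TopologicalSpace β] [OrderClosedTopology β]
    {l : Filter ι} {h : α → β} {g : ι → α} {a : α} {b : β}
    (h_mono : MonotoneOn h (Ici a)) (h_gt : ∀ x, a < x → b < h x) (hg : ∀ i, a ≤ g i)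
    (hlim : Tendsto (fun i => h (g i)) l (𝓝 b)) : Tendsto g l (𝓝 a) := by
  refine tendsto_order.2 ⟨fun y hy => .of_forall fun i => hy.trans_le (hg i), fun y hy => ?_⟩
  filter_upwards [hlim.eventually_lt_const (h_gt y hy)] with i hi
  exact h_mono.reflect_lt (hg i) hy.le hi

variable {R E : Type*} {μ : Measure ℝ} [μ.IsAddRightInvariant]
  {χ : ℝ → R} {f : ℕ → ℝ → E} {s : ℕ → ℝ} {a b : ℝ}

lemma ae_eq_zero_of_lt_add_sum_shift [Zero E] [SMulZeroClass R E]
    (hf : ∀ n, f (n + 1) =ᵐ[μ] fun x => χ x • f n (x - s n))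
    (hf₀ : ∀ᵐ x ∂μ, x < a → f 0 x = 0) (n : ℕ) :
    ∀ᵐ x ∂μ, x < a + ∑ k ∈ Finset.range n, s k → f n x = 0 := by
  induction n with
  | zero => simpa only [Finset.range_zero, Finset.sum_empty, add_zero] using hf₀
  | succ n ih =>
    have ih_shift := (measurePreserving_sub_right μ (s n)).quasiMeasurePreserving.ae ih
    filter_upwards [hf n, ih_shift] with x hx hzero hlt
    rw [Finset.sum_range_succ, ← add_assoc] at hlt
    rw [hx, hzero (sub_lt_iff_lt_add.2 hlt), smul_zero]

lemma eventually_ae_eq_zero_of_not_summable_shift [Zero R] [Zero E] [SMulWithZero R E]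
    (hχ : Function.support χ ⊆ Icc a b)
    (hf : ∀ n, f (n + 1) =ᵐ[μ] fun x => χ x • f n (x - s n))
    (hs : ∀ n, 0 ≤ s n) (hs_sum : ¬ Summable s) :
    ∀ᶠ n in atTop, f n =ᵐ[μ] 0 := by
  have h_off (n : ℕ) : ∀ᵐ x ∂μ, x ∉ Icc a b → f (n + 1) x = 0 := by
    filter_upwards [hf n] with x hx hmem
    rw [hx, Function.notMem_support.1 fun h => hmem (hχ h), zero_smul]
  have h_left := ae_eq_zero_of_lt_add_sum_shift (f := fun n => f (n + 1)) (fun n => hf (n + 1))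
    ((h_off 0).mono fun x hx hlt => hx fun hmem => hlt.not_ge hmem.1)
  have h_diverge : Tendsto (fun n => ∑ k ∈ Finset.range n, s (k + 1)) atTop atTop :=
    (not_summable_iff_tendsto_nat_atTop_of_nonneg fun n => hs (n + 1)).1
      (mt (summable_nat_add_iff 1).1 hs_sum)
  rw [← map_add_atTop_eq_nat 1, eventually_map]
  filter_upwards [h_diverge.eventually_gt_atTop (b - a)] with n hn
  filter_upwards [h_off n, h_left n] with x hx_off hx_left
  by_cases hxb : x ≤ b
  · exact hx_left (by linarith)
  · exact hx_off fun hmem => hxb hmem.2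

theorem stmt_4_general [Zero R] [NormedAddCommGroup E] [SMulWithZero R E] {p : ENNReal}
    (hχ : Function.support χ ⊆ Icc a b)
    {h : ℝ → ℝ} (hh_mono : MonotoneOn h (Ici 0)) (hh_zero : 0 ≤ h 0)
    (hh_pos : ∀ r, 0 < r → 0 < h r)
    {F : Lp E p μ → Lp E p μ} (hF : ∀ u, F u =ᵐ[μ] fun x => χ x • u (x - h ‖u‖))
    {u : ℕ → Lp E p μ} (hu : ∀ n, u (n + 1) = F (u n)) :
    Tendsto (fun n => ‖u n‖) atTop (𝓝 0) := by
  have h_norm (n : ℕ) : 0 ≤ ‖u n‖ := ENNReal.toReal_nonneg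
  have h_shift (n : ℕ) : 0 ≤ h ‖u n‖ :=
    hh_zero.trans (hh_mono self_mem_Ici (h_norm n) (h_norm n))
  have h_step (n : ℕ) : u (n + 1) =ᵐ[μ] fun x => χ x • u n (x - h ‖u n‖) := hu n ▸ hF (u n)
  by_cases h_sum : Summable fun n => h ‖u n‖
  · exact tendsto_nhds_of_tendsto_comp_of_monotoneOn_Ici hh_mono hh_pos h_norm
      h_sum.tendsto_atTop_zero
  · refine tendsto_const_nhds.congr' ?_
    have h_zero := eventually_ae_eq_zero_of_not_summable_shift (f := fun n => u n)
      hχ h_step h_shift h_sum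
    filter_upwards [h_zero] with n hn
    rw [Lp.eq_zero_iff_ae_eq_zero.2 hn, Lp.norm_zero]

end

/-- for the map `𝓕(u)(x) = χ(x) u(x - h(‖u‖))` on `L²(ℝ)`, every
orbit of the iteration `u_{n+1} = 𝓕(u_n)` converges to zero in norm. -/
theorem stmt_4 (χ : ℝ → ℝ) (hχ_smooth : ContDiff ℝ (⊤ : ℕ∞) χ)
    (hχ_range : ∀ x, χ x ∈ Set.Icc (0 : ℝ) 2)
    (hχ_supp : Function.support χ ⊆ Set.Icc (-1 : ℝ) 1)
    (hχ0 : χ 0 = 2)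
    (h : ℝ → ℝ) (hh_mono : StrictMonoOn h (Set.Ici 0))
    (hh_cont : ContinuousOn h (Set.Ici 0))
    (hh_nonneg : ∀ s : ℝ, 0 ≤ s → 0 ≤ h s) (hh0 : h 0 = 0)
    (F : Lp ℝ 2 (volume : Measure ℝ) → Lp ℝ 2 (volume : Measure ℝ))
    (hF : ∀ u : Lp ℝ 2 (volume : Measure ℝ),
      (F u : ℝ → ℝ) =ᵐ[volume] fun x => χ x * (u : ℝ → ℝ) (x - h ‖u‖)) :
    ∀ u : ℕ → Lp ℝ 2 (volume : Measure ℝ),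
      (∀ n, u (n + 1) = F (u n)) →
      Filter.Tendsto (fun n => ‖u n‖) Filter.atTop (nhds 0) := by
  intro u hu
  exact stmt_4_general hχ_supp hh_mono.monotoneOn hh0.ge
    (fun r hr => hh0 ▸ hh_mono Set.self_mem_Ici hr.le hr) hF hu
end

section
/- Let B = L²(ℝ), let χ : ℝ → [0,2] be a smooth function with support contained in [−1,1] and χ(0) = 2, and let h : [0,∞) → [0,∞) be a strictly increasing continuous function with h(0) = 0. Define 𝓕 : B → B by (𝓕(u))(x) = χ(x)·u(x − h(‖u‖_{L²})). Then for every δ > 0 and every u₀ ∈ B with ‖u₀‖_{L²} ≤ δ, the sequence u_{n+1} = 𝓕(u_n) satisfies sup_{n ∈ ℕ} ‖u_n‖_{L²} ≤ δ · 2^{2/h(δ) + 1}. -/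
open MeasureTheory

/-!
A step of the map multiplies by `χ`, which at most doubles the norm, and translates by `h ‖u‖`,
which is at least `h δ` as long as `‖u‖ > δ`. Consider an orbit from the last time its norm was at
most `δ`. After the next step it is supported in `[-1, 1]`; each further step raises the left end
of the support by `h δ` while `χ` still cuts it off at `1`, so at most `2 / h δ` such steps are
possible before the orbit reaches zero. Hence the norm exceeds `δ` by at most `2 / h δ + 1`
doublings.
-/

/-- The function `v` is almost everywhere the translate of `u` by `a` multiplied by the weight `χ`.
For `v = 𝓕 u` this holds with `a = h ‖u‖`; here `a` is a free parameter, so that a single step can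
be studied without reference to `h`. -/
def IsWeightedTranslate {G 𝕜 E : Type*} [MeasurableSpace G] [Sub G] [SMul 𝕜 E] (μ : Measure G)
    (χ : G → 𝕜) (a : G) (u v : G → E) : Prop :=
  v =ᵐ[μ] fun x => χ x • u (x - a)

namespace IsWeightedTranslate

theorem ae_eq_zero_of_notMem {G 𝕜 E : Type*} [MeasurableSpace G] [Sub G] [Zero 𝕜] [Zero E]
    [SMulWithZero 𝕜 E] {μ : Measure G} {χ : G → 𝕜} {a : G} {u v : G → E} {S : Set G}
    (hv : IsWeightedTranslate μ χ a u v) (hχ : Function.support χ ⊆ S) :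
    ∀ᵐ x ∂μ, x ∉ S → v x = 0 := by
  filter_upwards [hv] with x hx hxS
  rw [hx, Function.notMem_support.mp (Set.notMem_subset hχ hxS), zero_smul]

theorem norm_le_mul_norm {G 𝕜 E : Type*} [MeasurableSpace G] [AddGroup G] [MeasurableAdd G]
    [NormedRing 𝕜] [NormedAddCommGroup E] [Module 𝕜 E] [IsBoundedSMul 𝕜 E] {p : ENNReal}
    {μ : Measure G} [μ.IsAddRightInvariant] {χ : G → 𝕜} {C : ℝ} {a : G} {u v : Lp E p μ}
    (hv : IsWeightedTranslate μ χ a u v) (hχ : ∀ x, ‖χ x‖ ≤ C) : ‖v‖ ≤ C * ‖u‖ := by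
  have hmp := measurePreserving_sub_right μ a
  rw [← Lp.norm_compMeasurePreserving u hmp]
  refine Lp.norm_le_mul_norm_of_ae_le_mul ?_
  filter_upwards [hv, Lp.coeFn_compMeasurePreserving u hmp] with x hx hux
  rw [hx, hux]
  exact (norm_smul_le _ _).trans (mul_le_mul_of_nonneg_right (hχ x) (norm_nonneg _))

section Vanishing

variable {𝕜 E : Type*} [Zero E] {μ : Measure ℝ} [μ.IsAddRightInvariant] {χ : ℝ → 𝕜} {c κ : ℝ}

theorem ae_eq_zero_of_lt_add [SMulZeroClass 𝕜 E] {u v : ℝ → E} {s : ℝ}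
    (hv : IsWeightedTranslate μ χ s u v) (hu : ∀ᵐ x ∂μ, x < c → u x = 0) :
    ∀ᵐ x ∂μ, x < c + s → v x = 0 := by
  filter_upwards [hv, (measurePreserving_sub_right μ s).quasiMeasurePreserving.ae hu]
    with x hx hux hlt
  rw [hx, hux (sub_lt_iff_lt_add.mpr hlt), smul_zero]

variable {u : ℕ → ℝ → E} {s : ℕ → ℝ} {m : ℕ}

theorem ae_eq_zero_of_lt_add_mul [SMulZeroClass 𝕜 E]
    (hu : ∀ i, IsWeightedTranslate μ χ (s i) (u i) (u (i + 1))) (hs : ∀ i < m, κ ≤ s i)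
    (h0 : ∀ᵐ x ∂μ, x < c → u 0 x = 0) : ∀ᵐ x ∂μ, x < c + m * κ → u m x = 0 := by
  induction m with
  | zero => simpa using h0
  | succ m ih =>
    filter_upwards [(hu m).ae_eq_zero_of_lt_add (ih fun i hi => hs i (hi.trans m.lt_succ_self))]
      with x hx hlt
    refine hx (hlt.trans_le ?_)
    push_cast
    linarith [hs m m.lt_succ_self]

theorem mul_le_sub_of_not_ae_eq_zero [Zero 𝕜] [SMulWithZero 𝕜 E] {a b : ℝ}
    (hu : ∀ i, IsWeightedTranslate μ χ (s i) (u i) (u (i + 1)))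
    (hχ : Function.support χ ⊆ Set.Icc a b) (hs : ∀ i < m, κ ≤ s (i + 1))
    (hne : ¬ u (m + 1) =ᵐ[μ] 0) : m * κ ≤ b - a := by
  have hone : ∀ᵐ x ∂μ, x < a → u 1 x = 0 := by
    filter_upwards [(hu 0).ae_eq_zero_of_notMem hχ] with x hx hlt
    exact hx fun hmem => hlt.not_ge hmem.1
  have hleft : ∀ᵐ x ∂μ, x < a + m * κ → u (m + 1) x = 0 :=
    ae_eq_zero_of_lt_add_mul (u := fun i => u (i + 1)) (fun i => hu (i + 1)) hs hone
  by_contra! hlt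
  refine hne ?_
  filter_upwards [hleft, (hu m).ae_eq_zero_of_notMem hχ] with x hxl hxS
  by_cases hx : x ≤ b
  · exact hxl (by linarith)
  · exact hxS fun hmem => hx hmem.2

end Vanishing

theorem norm_succ_le_rpow_mul_norm_zero {𝕜 E : Type*} [NormedRing 𝕜] [NormedAddCommGroup E]
    [Module 𝕜 E] [IsBoundedSMul 𝕜 E] {p : ENNReal} [Fact (1 ≤ p)] {μ : Measure ℝ}
    [μ.IsAddRightInvariant] {χ : ℝ → 𝕜} {C a b κ : ℝ} {s : ℕ → ℝ} {u : ℕ → Lp E p μ} {m : ℕ}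
    (hu : ∀ i, IsWeightedTranslate μ χ (s i) (u i) (u (i + 1)))
    (hC : 1 ≤ C) (hχC : ∀ x, ‖χ x‖ ≤ C) (hχ : Function.support χ ⊆ Set.Icc a b)
    (hκ : 0 < κ) (hs : ∀ i < m, κ ≤ s (i + 1)) (hne : u (m + 1) ≠ 0) :
    ‖u (m + 1)‖ ≤ C ^ ((b - a) / κ + 1) * ‖u 0‖ := by
  have hlength : m ≤ (b - a) / κ :=
    (le_div_iff₀ hκ).mpr <| mul_le_sub_of_not_ae_eq_zero hu hχ hs <|
      (Lp.eq_zero_iff_ae_eq_zero (f := u (m + 1))).not.mp hne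
  calc ‖u (m + 1)‖
      ≤ C ^ (m + 1) * ‖u 0‖ :=
        le_geom (u := fun i => ‖u i‖) (zero_le_one.trans hC) (m + 1)
          fun i _ => (hu i).norm_le_mul_norm hχC
    _ = C ^ ((m : ℝ) + 1) * ‖u 0‖ := by rw [← Nat.cast_succ, Real.rpow_natCast]
    _ ≤ C ^ ((b - a) / κ + 1) * ‖u 0‖ := by gcongr

end IsWeightedTranslate

theorem exists_last_le_of_lt {α : Type*} [LinearOrder α] {f : ℕ → α} {d : α} {n : ℕ}
    (h0 : f 0 ≤ d) (hn : d < f n) :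
    ∃ j m, n = j + (m + 1) ∧ f j ≤ d ∧ ∀ i < m, d < f (j + (i + 1)) := by
  have hj : f (Nat.findGreatest (f · ≤ d) n) ≤ d :=
    Nat.findGreatest_spec (P := (f · ≤ d)) n.zero_le h0
  have hjn : Nat.findGreatest (f · ≤ d) n < n :=
    (Nat.findGreatest_le n).lt_of_ne fun heq => hn.not_ge (heq ▸ hj)
  obtain ⟨m, hm⟩ := Nat.exists_eq_add_of_lt hjn
  refine ⟨_, m, hm, hj, fun i hi => not_le.mp ?_⟩
  exact Nat.findGreatest_is_greatest (P := (f · ≤ d)) (n := n) (by lia) (by lia)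

theorem stmt_6_general {𝕜 E : Type*} [NormedRing 𝕜] [NormedAddCommGroup E] [Module 𝕜 E]
    [IsBoundedSMul 𝕜 E] {p : ENNReal} [Fact (1 ≤ p)] {μ : Measure ℝ} [μ.IsAddRightInvariant]
    {χ : ℝ → 𝕜} {C a b : ℝ} (hC : 1 ≤ C) (hχC : ∀ x, ‖χ x‖ ≤ C) (hab : a ≤ b)
    (hχ : Function.support χ ⊆ Set.Icc a b) {h : ℝ → ℝ} (hh : MonotoneOn h (Set.Ici 0))
    {F : Lp E p μ → Lp E p μ} (hF : ∀ u, F u =ᵐ[μ] fun x => χ x • u (x - h ‖u‖))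
    {δ : ℝ} (hδ : 0 < h δ) {u : ℕ → Lp E p μ} (hu : ∀ n, u (n + 1) = F (u n)) (hu0 : ‖u 0‖ ≤ δ)
    (n : ℕ) : ‖u n‖ ≤ δ * C ^ ((b - a) / h δ + 1) := by
  have hδ0 : 0 ≤ δ := (norm_nonneg _).trans hu0
  have hstep (i : ℕ) : IsWeightedTranslate μ χ (h ‖u i‖) (u i) (u (i + 1)) := hu i ▸ hF (u i)
  rcases le_or_gt ‖u n‖ δ with hn | hn
  · have hexp : 0 ≤ (b - a) / h δ + 1 := by have := sub_nonneg.mpr hab; positivity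
    exact hn.trans (le_mul_of_one_le_right hδ0 (Real.one_le_rpow hC hexp))
  obtain ⟨j, m, rfl, hj, hexcursion⟩ := exists_last_le_of_lt (f := fun i => ‖u i‖) hu0 hn
  have hne : u (j + (m + 1)) ≠ 0 := fun h0 => hn.not_ge (by rwa [h0, Lp.norm_zero])
  have hshift : ∀ i < m, h δ ≤ h ‖u (j + (i + 1))‖ := fun i hi =>
    hh hδ0 (norm_nonneg _) (hexcursion i hi).le
  calc ‖u (j + (m + 1))‖
      ≤ C ^ ((b - a) / h δ + 1) * ‖u j‖ :=
        IsWeightedTranslate.norm_succ_le_rpow_mul_norm_zero (u := fun i => u (j + i))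
          (fun i => hstep (j + i)) hC hχC hχ hδ hshift hne
    _ ≤ C ^ ((b - a) / h δ + 1) * δ := by gcongr
    _ = δ * C ^ ((b - a) / h δ + 1) := mul_comm _ _

/-- for the map `𝓕(u)(x) = χ(x) u(x - h(‖u‖))` on `L²(ℝ)`, any orbit
starting with `‖u₀‖ ≤ δ` satisfies `sup_n ‖u_n‖ ≤ δ · 2^{2/h(δ)+1}`. -/
theorem stmt_6 (χ : ℝ → ℝ) (hχ_smooth : ContDiff ℝ (⊤ : ℕ∞) χ)
    (hχ_range : ∀ x, χ x ∈ Set.Icc (0 : ℝ) 2)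
    (hχ_supp : Function.support χ ⊆ Set.Icc (-1 : ℝ) 1)
    (hχ0 : χ 0 = 2)
    (h : ℝ → ℝ) (hh_mono : StrictMonoOn h (Set.Ici 0))
    (hh_cont : ContinuousOn h (Set.Ici 0))
    (hh_nonneg : ∀ s : ℝ, 0 ≤ s → 0 ≤ h s) (hh0 : h 0 = 0)
    (F : Lp ℝ 2 (volume : Measure ℝ) → Lp ℝ 2 (volume : Measure ℝ))
    (hF : ∀ u : Lp ℝ 2 (volume : Measure ℝ),
      (F u : ℝ → ℝ) =ᵐ[volume] fun x => χ x * (u : ℝ → ℝ) (x - h ‖u‖)) :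
    ∀ δ > (0 : ℝ), ∀ u : ℕ → Lp ℝ 2 (volume : Measure ℝ),
      (∀ n, u (n + 1) = F (u n)) → ‖u 0‖ ≤ δ →
      ∀ n : ℕ, ‖u n‖ ≤ δ * 2 ^ (2 / h δ + 1) := by
  intro δ hδ u hu hu0 n
  have hhδ : 0 < h δ := hh0 ▸ hh_mono Set.self_mem_Ici hδ.le hδ
  have hχ_norm (x : ℝ) : ‖χ x‖ ≤ 2 := (Real.norm_of_nonneg (hχ_range x).1).trans_le (hχ_range x).2
  have hwidth : (1 : ℝ) - -1 = 2 := by norm_num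
  exact hwidth ▸ stmt_6_general one_le_two hχ_norm (by norm_num) hχ_supp hh_mono.monotoneOn hF hhδ
    hu hu0 n
end

section
/- Let u₀ : [−1,0] → ℝ be a nondecreasing continuous function with u₀(−1) = 0 (hence u₀ ≥ 0), and set C = (1 − e^{−3})^{−1/2}. Then for every t ≥ 1, every α ∈ [0,1], and every x₀ ∈ [−1,0] satisfying x₀ + u₀(x₀)²·(e^{3t} − 1) ≤ 0 (i.e. x₀ lies on a characteristic that has not yet exited through x = 0), one has e^t · u₀(x₀) ≤ C^{1−α} · e^{(3α−1)t/2} · (max_{−1 ≤ x ≤ 0} u₀(x))^α. In particular, for 0 < α < 1/3 the right-hand side tends to 0 as t → ∞, which expresses nonlinear asymptotic stability of the zero solution of the quasilinear conservation law u_t + ((−x + u²)u)_x = 0 on [−1,0] with boundary condition u(−1,t) = 0, whose solution for nondecreasing data is given along characteristics by u(X(t), t) = e^t u₀(x₀) with X(t) = e^{−t}(x₀ + u₀(x₀)²(e^{3t} − 1)). -/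
/-!
The factor `e^{3t} - 1` is at least `(1 - e^{-3T}) e^{3t}` for `t ≥ T`, so a characteristic that
starts in `[-1, 0]` and has not reached `x = 0` carries an initial value `v = u₀ x₀` of size at
most `C e^{-3t/2}`. Interpolating this with `v ≤ sup u₀`, as `v = v^{1-α} v^α`, and multiplying by
`e^t` gives the rate `1 - 3(1-α)/2 = (3α-1)/2`.
-/

open Real Set

theorem abs_le_rpow_neg_half_of_sq_mul_le_one {v c : ℝ} (hc : 0 < c) (h : v ^ 2 * c ≤ 1) :
    |v| ≤ c ^ (-(1 : ℝ) / 2) :=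
  calc |v| ≤ √c⁻¹ := abs_le_sqrt (by rwa [← one_div, le_div_iff₀ hc])
    _ = c ^ (-(1 : ℝ) / 2) := by
      rw [sqrt_eq_rpow, inv_rpow hc.le, ← rpow_neg hc.le, neg_div]

theorem one_sub_exp_neg_mul_exp_le {r s : ℝ} (hrs : r ≤ s) :
    (1 - exp (-r)) * exp s ≤ exp s - 1 := by
  have one_le : 1 ≤ exp (-r) * exp s := by
    rw [← exp_add]
    exact one_le_exp (by linarith)
  linarith

theorem abs_le_rpow_mul_exp_of_sq_mul_exp_sub_one_le_one {v r s : ℝ} (hr : 0 < r) (hrs : r ≤ s)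
    (h : v ^ 2 * (exp s - 1) ≤ 1) :
    |v| ≤ (1 - exp (-r)) ^ (-(1 : ℝ) / 2) * exp (-s / 2) := by
  have factor_pos : 0 < 1 - exp (-r) := sub_pos.2 (exp_lt_one_iff.2 (neg_neg_of_pos hr))
  have sq_mul_le : v ^ 2 * ((1 - exp (-r)) * exp s) ≤ 1 :=
    (mul_le_mul_of_nonneg_left (one_sub_exp_neg_mul_exp_le hrs) (sq_nonneg v)).trans h
  calc |v| ≤ ((1 - exp (-r)) * exp s) ^ (-(1 : ℝ) / 2) :=
        abs_le_rpow_neg_half_of_sq_mul_le_one (by positivity) sq_mul_le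
    _ = (1 - exp (-r)) ^ (-(1 : ℝ) / 2) * exp (-s / 2) := by
        rw [mul_rpow factor_pos.le (exp_nonneg s), ← exp_mul]
        ring_nf

theorem le_rpow_one_sub_mul_rpow {v a b α : ℝ} (hv : 0 ≤ v) (hva : v ≤ a) (hvb : v ≤ b)
    (hα : α ∈ Icc (0 : ℝ) 1) : v ≤ a ^ (1 - α) * b ^ α := by
  have hα' : 0 ≤ 1 - α := sub_nonneg.2 hα.2
  calc v = v ^ (1 - α) * v ^ α := by
        rw [← rpow_add_of_nonneg hv hα' hα.1, sub_add_cancel, rpow_one]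
    _ ≤ a ^ (1 - α) * b ^ α :=
        mul_le_mul (rpow_le_rpow hv hva hα') (rpow_le_rpow hv hvb hα.1)
          (rpow_nonneg hv α) (rpow_nonneg (hv.trans hva) (1 - α))

theorem exp_mul_rpow_mul_exp_eq {C : ℝ} (hC : 0 ≤ C) (t α : ℝ) :
    exp t * (C * exp (-(3 * t) / 2)) ^ (1 - α) =
      C ^ (1 - α) * exp ((3 * α - 1) * t / 2) := by
  rw [mul_rpow hC (exp_nonneg _), ← exp_mul, mul_left_comm, ← exp_add]
  ring_nf

theorem stmt_9_general {u₀ : ℝ → ℝ} (hnonneg : ∀ x ∈ Icc (-1 : ℝ) 0, 0 ≤ u₀ x)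
    (hbdd : BddAbove (u₀ '' Icc (-1 : ℝ) 0)) {T t α x₀ : ℝ} (hT : 0 < T) (hTt : T ≤ t)
    (hα : α ∈ Icc (0 : ℝ) 1) (hx₀ : x₀ ∈ Icc (-1 : ℝ) 0)
    (hinside : x₀ + u₀ x₀ ^ 2 * (exp (3 * t) - 1) ≤ 0) :
    exp t * u₀ x₀ ≤ ((1 - exp (-(3 * T))) ^ (-(1 : ℝ) / 2)) ^ (1 - α) *
      exp ((3 * α - 1) * t / 2) * sSup (u₀ '' Icc (-1 : ℝ) 0) ^ α := by
  set C := (1 - exp (-(3 * T))) ^ (-(1 : ℝ) / 2)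
  set M := sSup (u₀ '' Icc (-1 : ℝ) 0)
  have C_nonneg : 0 ≤ C := rpow_nonneg (sub_nonneg.2 (exp_le_one_iff.2 (by linarith))) _
  have le_sup : u₀ x₀ ≤ M := le_csSup hbdd (mem_image_of_mem u₀ hx₀)
  have le_decay : u₀ x₀ ≤ C * exp (-(3 * t) / 2) :=
    (le_abs_self _).trans <| abs_le_rpow_mul_exp_of_sq_mul_exp_sub_one_le_one
      (by linarith) (by linarith) (by linarith [hx₀.1])
  calc exp t * u₀ x₀ ≤ exp t * ((C * exp (-(3 * t) / 2)) ^ (1 - α) * M ^ α) := by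
        gcongr
        exact le_rpow_one_sub_mul_rpow (hnonneg x₀ hx₀) le_decay le_sup hα
    _ = C ^ (1 - α) * exp ((3 * α - 1) * t / 2) * M ^ α := by
        rw [← mul_assoc, exp_mul_rpow_mul_exp_eq C_nonneg]

/-- decay along characteristics for the conservation law
`u_t + ((-x + u²)u)_x = 0` on `[-1,0]` with nondecreasing data: for `t ≥ 1`,
`α ∈ [0,1]` and characteristics still inside the domain,
`e^t u₀(x₀) ≤ C^{1-α} e^{(3α-1)t/2} (max u₀)^α` with `C = (1 - e^{-3})^{-1/2}`. -/
theorem stmt_9 (u₀ : ℝ → ℝ) (hmono : MonotoneOn u₀ (Set.Icc (-1 : ℝ) 0))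
    (hcont : ContinuousOn u₀ (Set.Icc (-1 : ℝ) 0)) (hu₀ : u₀ (-1) = 0)
    (C : ℝ) (hC : C = (1 - Real.exp (-3)) ^ (-(1 : ℝ) / 2)) :
    ∀ t : ℝ, 1 ≤ t → ∀ α ∈ Set.Icc (0 : ℝ) 1, ∀ x₀ ∈ Set.Icc (-1 : ℝ) 0,
      x₀ + (u₀ x₀) ^ 2 * (Real.exp (3 * t) - 1) ≤ 0 →
      Real.exp t * u₀ x₀ ≤
        C ^ (1 - α) * Real.exp ((3 * α - 1) * t / 2) *
          (sSup (u₀ '' Set.Icc (-1 : ℝ) 0)) ^ α := by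
  intro t ht α hα x₀ hx₀ hinside
  have hnonneg : ∀ x ∈ Icc (-1 : ℝ) 0, 0 ≤ u₀ x := fun x hx ↦
    hu₀ ▸ hmono (left_mem_Icc.2 (by norm_num)) hx hx.1
  simpa only [hC, mul_one] using stmt_9_general hnonneg
    (isCompact_Icc.bddAbove_image hcont) one_pos ht hα hx₀ hinside
end

section
/- Let B be a complex Hilbert space, let L : B → B be a bounded normal linear operator with spectral radius r = r(L) > 1, let a > 0, and let α : [0,a] → [0,∞) be a nondecreasing function with ∫₀^a α(s)/s ds < ∞. Let 𝓕 : B → B satisfy 𝓕(0) = 0 and ‖𝓕(u) − Lu‖ ≤ α(‖u‖)·‖u‖ whenever ‖u‖ ≤ a. Fix η ∈ (0,a] such that (2/(r·ln r))·∫₀^η α(s)/s ds ≤ 1/4, let δ > 0 and let N be a positive integer such that 2·r^N·δ ≤ η. Then for every u₀ ∈ B with ‖u₀‖ ≤ δ, the sequence u_{n+1} = 𝓕(u_n) satisfies ‖u_k‖ ≤ 2·r^k·‖u₀‖ for all 0 ≤ k ≤ N. -/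
open MeasureTheory

/-!
Rescale by `r ^ n`: the perturbation multiplies `‖u n‖ / r ^ n` by at most `1 + α ‖u n‖ / r` per
step. As long as `‖u n‖ ≤ C r ^ n ‖u 0‖`, the total relative growth is governed by the values of `α`
along the geometric progression `C δ r ^ n`. On a logarithmic scale these points are equally spaced
by `log r`, so `log r` times the sum of those values is at most the integral of `α s / s`, and
smallness of this integral makes the assumed bound `C r ^ n ‖u 0‖` reproduce itself.
-/

theorem mul_log_div_le_integral_div {α : ℝ → ℝ} {x y : ℝ} (hx : 0 < x) (hxy : x ≤ y)
    (hmono : MonotoneOn α (Set.Icc x y)) :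
    α x * Real.log (y / x) ≤ ∫ s in x..y, α s / s := by
  have hinv : ContinuousOn (fun s : ℝ => s⁻¹) (Set.uIcc x y) :=
    continuousOn_inv₀.mono fun s hs => ((lt_inf_iff.2 ⟨hx, hx.trans_le hxy⟩).trans_le hs.1).ne'
  calc α x * Real.log (y / x) = ∫ s in x..y, α x * s⁻¹ := by
        rw [intervalIntegral.integral_const_mul, integral_inv_of_pos hx (hx.trans_le hxy)]
    _ ≤ ∫ s in x..y, α s * s⁻¹ := by
        have hα : IntervalIntegrable α volume x y :=
          MonotoneOn.intervalIntegrable (by rwa [Set.uIcc_of_le hxy])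
        refine intervalIntegral.integral_mono_on hxy (hinv.intervalIntegrable.const_mul _)
          (hα.mul_continuousOn hinv) fun s hs => ?_
        exact mul_le_mul_of_nonneg_right (hmono (Set.left_mem_Icc.2 hxy) hs hs.1)
          (inv_nonneg.2 (hx.le.trans hs.1))
    _ = ∫ s in x..y, α s / s := by simp only [div_eq_mul_inv]

theorem sum_geometric_mul_log_le_setIntegral_div {α : ℝ → ℝ} {c r b : ℝ} {n : ℕ}
    (hc : 0 < c) (hr : 1 ≤ r) (hn : c * r ^ n ≤ b) (hmono : MonotoneOn α (Set.Ioc 0 b))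
    (hnonneg : ∀ s ∈ Set.Ioc 0 b, 0 ≤ α s)
    (hint : IntegrableOn (fun s => α s / s) (Set.Ioc 0 b)) :
    (∑ j ∈ Finset.range n, α (c * r ^ j)) * Real.log r ≤ ∫ s in Set.Ioc 0 b, α s / s := by
  have hpos (j : ℕ) : 0 < c * r ^ j := mul_pos hc (pow_pos (one_pos.trans_le hr) j)
  have hle {i j : ℕ} (hij : i ≤ j) : c * r ^ i ≤ c * r ^ j := by gcongr
  have hratio (j : ℕ) : c * r ^ (j + 1) / (c * r ^ j) = r := by
    rw [pow_succ, ← mul_assoc, mul_div_cancel_left₀ _ (hpos j).ne']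
  have hsub (i : ℕ) {j : ℕ} (hj : j ≤ n) :
      Set.Ioc (c * r ^ i) (c * r ^ j) ⊆ Set.Ioc 0 b :=
    Set.Ioc_subset_Ioc (hpos i).le ((hle hj).trans hn)
  calc (∑ j ∈ Finset.range n, α (c * r ^ j)) * Real.log r
      ≤ ∑ j ∈ Finset.range n, ∫ s in c * r ^ j..c * r ^ (j + 1), α s / s := by
        rw [Finset.sum_mul]
        refine Finset.sum_le_sum fun j hj => ?_
        have hstep := mul_log_div_le_integral_div (hpos j) (hle j.le_succ) <| hmono.mono fun s hs =>
          ⟨(hpos j).trans_le hs.1, hs.2.trans ((hle (Finset.mem_range.1 hj)).trans hn)⟩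
        rwa [hratio] at hstep
    _ = ∫ s in Set.Ioc (c * r ^ 0) (c * r ^ n), α s / s := by
        rw [intervalIntegral.sum_integral_adjacent_intervals fun j hj =>
            (intervalIntegrable_iff_integrableOn_Ioc_of_le (hle j.le_succ)).2
              (hint.mono_set (hsub j hj)),
          intervalIntegral.integral_of_le (hle n.zero_le)]
    _ ≤ ∫ s in Set.Ioc 0 b, α s / s := by
        refine setIntegral_mono_set hint ?_ (hsub 0 le_rfl).eventuallyLE
        filter_upwards [ae_restrict_mem measurableSet_Ioc] with s hs
        exact div_nonneg (hnonneg s hs) hs.1.le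

theorem le_mul_pow_of_step_le_add_mul {x e : ℕ → ℝ} {r C : ℝ} {N : ℕ} (hr : 0 < r) (hC : 0 ≤ C)
    (hx : 0 ≤ x 0) (he : ∀ j < N, 0 ≤ e j)
    (hsum : 1 + C / r * ∑ j ∈ Finset.range N, e j ≤ C)
    (hstep : ∀ j < N, x j ≤ C * r ^ j * x 0 → x (j + 1) ≤ (r + e j) * x j) :
    ∀ k ≤ N, x k ≤ C * r ^ k * x 0 := by
  have hpartial : ∀ k ≤ N, 1 + C / r * ∑ j ∈ Finset.range k, e j ≤ C := fun k hk => by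
    refine le_trans ?_ hsum
    gcongr 1 + C / r * ?_
    exact Finset.sum_le_sum_of_subset_of_nonneg (Finset.range_mono hk)
      fun j hj _ => he j (Finset.mem_range.1 hj)
  have hclose : ∀ k ≤ N, (1 + C / r * ∑ j ∈ Finset.range k, e j) * r ^ k * x 0 ≤
      C * r ^ k * x 0 := fun k hk => by
    gcongr
    exact hpartial k hk
  suffices hrefined : ∀ k ≤ N,
      x k ≤ (1 + C / r * ∑ j ∈ Finset.range k, e j) * r ^ k * x 0 from
    fun k hk => (hrefined k hk).trans (hclose k hk)
  intro k
  induction k with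
  | zero => simp
  | succ k ih =>
    intro hk
    have hrefined := ih (Nat.le_of_succ_le hk)
    have hcoarse := hrefined.trans (hclose k (Nat.le_of_succ_le hk))
    calc x (k + 1) ≤ r * x k + e k * x k := (hstep k hk hcoarse).trans_eq (add_mul ..)
      _ ≤ r * ((1 + C / r * ∑ j ∈ Finset.range k, e j) * r ^ k * x 0) +
            e k * (C * r ^ k * x 0) := by
          gcongr
          exact he k hk
      _ = (1 + C / r * ∑ j ∈ Finset.range (k + 1), e j) * r ^ (k + 1) * x 0 := by
          rw [Finset.sum_range_succ]
          field_simp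
          ring

theorem norm_eq_of_spectralRadius_eq_ofReal {A : Type*} [CStarAlgebra A] (x : A)
    [IsStarNormal x] {r : ℝ} (hr0 : 0 ≤ r) (hr : spectralRadius ℂ x = ENNReal.ofReal r) :
    ‖x‖ = r := by
  rw [← coe_nnnorm, ← ENNReal.coe_toReal, ← IsStarNormal.spectralRadius_eq_nnnorm, hr,
    ENNReal.toReal_ofReal hr0]

theorem stmt_12_general {B : Type*} [SeminormedAddCommGroup B] {L F : B → B} {α : ℝ → ℝ}
    {r a η δ C : ℝ} {N : ℕ} (hr : 1 < r) (hL : ∀ u, ‖L u‖ ≤ r * ‖u‖)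
    (hα_mono : MonotoneOn α (Set.Icc 0 a)) (hα_nonneg : ∀ s ∈ Set.Icc (0 : ℝ) a, 0 ≤ α s)
    (hα_int : IntegrableOn (fun s => α s / s) (Set.Ioc 0 a))
    (hF : ∀ u, ‖u‖ ≤ a → ‖F u - L u‖ ≤ α ‖u‖ * ‖u‖) (hη : η ≤ a) (hC : 0 < C)
    (hη_cond : C / (r * Real.log r) * ∫ s in Set.Ioc (0 : ℝ) η, α s / s ≤ C - 1)
    (hδ : 0 < δ) (hNδ : C * r ^ N * δ ≤ η) {u : ℕ → B} (hu0 : ‖u 0‖ ≤ δ)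
    (hu : ∀ n, u (n + 1) = F (u n)) :
    ∀ k ≤ N, ‖u k‖ ≤ C * r ^ k * ‖u 0‖ := by
  have hr0 : 0 < r := one_pos.trans hr
  have hlog : 0 < Real.log r := Real.log_pos hr
  have hmem : ∀ j ≤ N, C * δ * r ^ j ∈ Set.Icc 0 a := fun j hj => by
    refine ⟨by positivity, le_trans ?_ (hNδ.trans hη)⟩
    rw [mul_right_comm]
    gcongr
    exact hr.le
  have hIoc : Set.Ioc 0 η ⊆ Set.Icc 0 a := fun s hs => ⟨hs.1.le, hs.2.trans hη⟩
  -- Starting from `C * δ` rather than `C * ‖u 0‖` keeps the progression positive if `‖u 0‖ = 0`.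
  have hdini := sum_geometric_mul_log_le_setIntegral_div (mul_pos hC hδ) hr.le
    ((mul_right_comm ..).trans_le hNδ) (hα_mono.mono hIoc) (fun s hs => hα_nonneg s (hIoc hs))
    (hα_int.mono_set (Set.Ioc_subset_Ioc_right hη))
  have hsum : 1 + C / r * ∑ j ∈ Finset.range N, α (C * δ * r ^ j) ≤ C := by
    rw [← le_sub_iff_add_le']
    calc C / r * ∑ j ∈ Finset.range N, α (C * δ * r ^ j)
        = C / (r * Real.log r) *
            ((∑ j ∈ Finset.range N, α (C * δ * r ^ j)) * Real.log r) := by field_simp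
      _ ≤ C / (r * Real.log r) * ∫ s in Set.Ioc (0 : ℝ) η, α s / s := by gcongr
      _ ≤ C - 1 := hη_cond
  refine le_mul_pow_of_step_le_add_mul (x := fun n => ‖u n‖) hr0 hC.le (norm_nonneg _)
    (fun j hj => hα_nonneg _ (hmem j hj.le)) hsum fun j hj hcoarse => ?_
  have hmajorant : ‖u j‖ ≤ C * δ * r ^ j := hcoarse.trans <| by
    rw [mul_right_comm]
    gcongr
  have ha : ‖u j‖ ≤ a := hmajorant.trans (hmem j hj.le).2
  have hα : α ‖u j‖ ≤ α (C * δ * r ^ j) :=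
    hα_mono ⟨norm_nonneg _, ha⟩ (hmem j hj.le) hmajorant
  calc ‖u (j + 1)‖ ≤ ‖L (u j)‖ + ‖F (u j) - L (u j)‖ := by
        rw [hu]
        exact norm_le_norm_add_norm_sub' _ _
    _ ≤ r * ‖u j‖ + α ‖u j‖ * ‖u j‖ := add_le_add (hL _) (hF _ ha)
    _ ≤ r * ‖u j‖ + α (C * δ * r ^ j) * ‖u j‖ := by gcongr
    _ = (r + α (C * δ * r ^ j)) * ‖u j‖ := (add_mul ..).symm

/-- the bootstrap upper bound in the proof of the sharpened
Rutman–Daleckii theorem: under the normality and integrability assumptions, if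
`(2/(r ln r)) ∫₀^η α(s)/s ds ≤ 1/4` and `2 r^N δ ≤ η`, then any orbit starting
with `‖u₀‖ ≤ δ` satisfies `‖u_k‖ ≤ 2 r^k ‖u₀‖` for `0 ≤ k ≤ N`. -/
theorem stmt_12 {B : Type*} [NormedAddCommGroup B] [InnerProductSpace ℂ B]
    [CompleteSpace B]
    (L : B →L[ℂ] B)
    (hnormal : L ∘L ContinuousLinearMap.adjoint L = ContinuousLinearMap.adjoint L ∘L L)
    (r : ℝ) (hr : spectralRadius ℂ L = ENNReal.ofReal r) (hr1 : 1 < r)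
    (a : ℝ) (ha : 0 < a)
    (α : ℝ → ℝ) (hα_mono : MonotoneOn α (Set.Icc 0 a))
    (hα_nonneg : ∀ s ∈ Set.Icc (0 : ℝ) a, 0 ≤ α s)
    (hα_int : IntegrableOn (fun s => α s / s) (Set.Ioc 0 a))
    (F : B → B) (hF0 : F 0 = 0)
    (hF : ∀ u : B, ‖u‖ ≤ a → ‖F u - L u‖ ≤ α ‖u‖ * ‖u‖)
    (η : ℝ) (hη : η ∈ Set.Ioc (0 : ℝ) a)
    (hη_cond : 2 / (r * Real.log r) * ∫ s in Set.Ioc (0 : ℝ) η, α s / s ≤ 1 / 4)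
    (δ : ℝ) (hδ : 0 < δ) (N : ℕ) (hN : 0 < N) (hNδ : 2 * r ^ N * δ ≤ η) :
    ∀ u : ℕ → B, ‖u 0‖ ≤ δ → (∀ n, u (n + 1) = F (u n)) →
      ∀ k ≤ N, ‖u k‖ ≤ 2 * r ^ k * ‖u 0‖ := by
  have : IsStarNormal L := ⟨hnormal.symm⟩
  exact fun u => stmt_12_general hr1
    (L.le_of_opNorm_le (norm_eq_of_spectralRadius_eq_ofReal L (zero_le_one.trans hr1.le) hr).le)
    hα_mono hα_nonneg hα_int hF hη.2 two_pos (hη_cond.trans (by norm_num)) hδ hNδ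
end

section
/- Let ρ > 1, let a > 0, and let α : [0,∞) → [0,∞) be nondecreasing on [0,a] with α(s) → 0 as s → 0⁺. Consider the scalar map 𝓕 : ℝ → ℝ defined by 𝓕(u) = ρu − α(|u|)·u. If the equilibrium u = 0 of the iteration u_{n+1} = 𝓕(u_n) is exponentially unstable at the rate ρ — i.e. there exist ε > 0 and C > 0 such that for every δ > 0 there is u₀ with 0 < |u₀| ≤ δ whose orbit satisfies |u_n| ≥ C·ρⁿ·|u₀| for all n with max(|u₀|, …, |u_n|) ≤ ε — then ∫₀^a α(s)/s ds < ∞. -/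
open MeasureTheory

/-!
Let `v k = ‖u k‖` along an unstable orbit. Since `v (k + 1) ≤ (ρ - α (v k)) v k`, each step loses
a factor `1 - α (v k) / ρ ≤ exp (-α (v k) / ρ)` against pure growth at rate `ρ`; the lower bound
`C ρⁿ v 0 ≤ v n` therefore forces `∑ α (v k) ≤ -ρ log C`, uniformly in the starting point. On the
other hand a step multiplies `v` by at most `ρ`, and `α` is nondecreasing, so `log ρ` times
the same sum, up to two boundary terms, controls `∫ α s / s ds` over the range swept by the orbit.
The lower bound also makes the orbit leave a fixed interval `[0, b]`, so letting `v 0 → 0` bounds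
the integral over `(0, b]`.
-/

open Set Filter Topology

section IntegralDivId

variable {α : ℝ → ℝ} {x y : ℝ}

theorem intervalIntegrable_div_id_of_monotoneOn (hα : MonotoneOn α (uIcc x y)) (hx : 0 < x)
    (hy : 0 < y) : IntervalIntegrable (fun s => α s / s) volume x y := by
  simp only [div_eq_mul_inv]
  exact hα.intervalIntegrable.mul_continuousOn
    (continuousOn_inv₀.mono fun s hs => ((lt_min hx hy).trans_le hs.1).ne')

theorem integral_div_id_le_of_monotoneOn (hα : MonotoneOn α (uIcc x y)) (hx : 0 < x)
    (hy : 0 < y) : ∫ s in x..y, α s / s ≤ α y * Real.log (y / x) := by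
  have hint := intervalIntegrable_div_id_of_monotoneOn hα hx hy
  have hint_const := intervalIntegrable_div_id_of_monotoneOn (monotoneOn_const (c := α y)) hx hy
  calc ∫ s in x..y, α s / s ≤ ∫ s in x..y, α y / s := by
        rcases le_total x y with hxy | hyx
        · refine intervalIntegral.integral_mono_on hxy hint hint_const fun s hs => ?_
          have hs0 : 0 < s := hx.trans_le hs.1
          have : α s ≤ α y := hα (uIcc_of_le hxy ▸ hs) right_mem_uIcc hs.2
          gcongr
        · rw [intervalIntegral.integral_symm, intervalIntegral.integral_symm y x, neg_le_neg_iff]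
          refine intervalIntegral.integral_mono_on hyx hint_const.symm hint.symm fun s hs => ?_
          have hs0 : 0 < s := hy.trans_le hs.1
          have : α y ≤ α s := hα right_mem_uIcc (uIcc_of_ge hyx ▸ hs) hs.1
          gcongr
    _ = α y * Real.log (y / x) := by
        simp only [div_eq_mul_inv (α y), intervalIntegral.integral_const_mul,
          integral_inv_of_pos hx hy]

theorem integral_div_id_le_mul_log_of_le_mul {ρ : ℝ} (hα : MonotoneOn α (uIcc x y)) (hx : 0 < x)
    (hy : 0 < y) (hαy : 0 ≤ α y) (hyx : y ≤ ρ * x) :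
    ∫ s in x..y, α s / s ≤ α y * Real.log ρ := by
  have : y / x ≤ ρ := (div_le_iff₀ hx).2 hyx
  calc ∫ s in x..y, α s / s ≤ α y * Real.log (y / x) := integral_div_id_le_of_monotoneOn hα hx hy
    _ ≤ α y * Real.log ρ := by gcongr

theorem integral_div_id_le_sum_mul_log {ρ b : ℝ} {v : ℕ → ℝ} {n : ℕ}
    (hα : MonotoneOn α (Ioc 0 b)) (hα_nonneg : ∀ s ∈ Ioc 0 b, 0 ≤ α s)
    (hv : ∀ k ≤ n, v k ∈ Ioc 0 b) (hstep : ∀ k < n, v (k + 1) ≤ ρ * v k) :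
    ∫ s in v 0..v n, α s / s ≤ (∑ k ∈ Finset.range n, α (v (k + 1))) * Real.log ρ := by
  have hmono : ∀ k < n, MonotoneOn α (uIcc (v k) (v (k + 1))) := fun k hk =>
    hα.mono (ordConnected_Ioc.uIcc_subset (hv k hk.le) (hv (k + 1) hk))
  rw [← intervalIntegral.sum_integral_adjacent_intervals fun k hk =>
    intervalIntegrable_div_id_of_monotoneOn (hmono k hk) (hv k hk.le).1 (hv (k + 1) hk).1,
    Finset.sum_mul]
  refine Finset.sum_le_sum fun k hk => ?_
  have hk := Finset.mem_range.1 hk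
  exact integral_div_id_le_mul_log_of_le_mul (hmono k hk) (hv k hk.le).1 (hv (k + 1) hk).1
    (hα_nonneg _ (hv (k + 1) hk)) (hstep k hk)

end IntegralDivId

theorem integrableOn_Ioc_of_frequently_integral_norm_le {E : Type*} [NormedAddCommGroup E]
    {f : ℝ → E} {c b I : ℝ}
    (hf : ∃ᶠ x in 𝓝 c, IntegrableOn f (Ioc x b) ∧ ∫ s in Ioc x b, ‖f s‖ ≤ I) :
    IntegrableOn f (Ioc c b) := by
  obtain ⟨x, hx_lim, hx⟩ := exists_seq_forall_of_frequently hf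
  exact integrableOn_Ioc_of_intervalIntegral_norm_bounded_left (fun i => (hx i).1) hx_lim
    (Eventually.of_forall fun i => (hx i).2)

section Growth

variable {ρ C : ℝ} {v β : ℕ → ℝ} {n : ℕ}

theorem le_pow_mul_exp_neg_sum_div (hρ : 0 < ρ) (hv : ∀ k < n, 0 ≤ v k)
    (hstep : ∀ k < n, v (k + 1) ≤ (ρ - β k) * v k) :
    v n ≤ ρ ^ n * Real.exp (-((∑ k ∈ Finset.range n, β k) / ρ)) * v 0 := by
  induction n with
  | zero => simp
  | succ n ih =>
    have hfactor : ρ - β n ≤ ρ * Real.exp (-(β n / ρ)) := by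
      calc ρ - β n = ρ * (1 - β n / ρ) := by field_simp
        _ ≤ ρ * Real.exp (-(β n / ρ)) := by gcongr; exact Real.one_sub_le_exp_neg _
    calc v (n + 1) ≤ (ρ - β n) * v n := hstep n n.lt_succ_self
      _ ≤ ρ * Real.exp (-(β n / ρ)) * v n := by
          gcongr
          exact hv n n.lt_succ_self
      _ ≤ ρ * Real.exp (-(β n / ρ)) *
            (ρ ^ n * Real.exp (-((∑ k ∈ Finset.range n, β k) / ρ)) * v 0) := by
          gcongr
          exact ih (fun k hk => hv k (hk.trans n.lt_succ_self))
            fun k hk => hstep k (hk.trans n.lt_succ_self)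
      _ = ρ ^ (n + 1) * Real.exp (-((∑ k ∈ Finset.range (n + 1), β k) / ρ)) * v 0 := by
          rw [Finset.sum_range_succ, add_div, neg_add, Real.exp_add]
          ring

theorem sum_le_neg_mul_log_of_pow_mul_le (hρ : 0 < ρ) (hC : 0 < C) (hv0 : 0 < v 0)
    (hv : ∀ k < n, 0 ≤ v k) (hstep : ∀ k < n, v (k + 1) ≤ (ρ - β k) * v k)
    (hgrow : C * ρ ^ n * v 0 ≤ v n) :
    ∑ k ∈ Finset.range n, β k ≤ -(ρ * Real.log C) := by
  have hC_le : C ≤ Real.exp (-((∑ k ∈ Finset.range n, β k) / ρ)) := by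
    have h := hgrow.trans (le_pow_mul_exp_neg_sum_div hρ hv hstep)
    rw [mul_comm C] at h
    exact le_of_mul_le_mul_left (le_of_mul_le_mul_right h hv0) (pow_pos hρ n)
  have hlog := (Real.log_le_iff_le_exp hC).2 hC_le
  rw [le_neg, div_le_iff₀ hρ] at hlog
  linarith

theorem exists_lt_of_pow_mul_le {b : ℝ} (hρ : 1 < ρ) (hC : 0 < C) (hv0 : 0 < v 0)
    (hgrow : ∀ n, (∀ k ≤ n, v k ≤ b) → C * ρ ^ n * v 0 ≤ v n) : ∃ n, b < v n := by
  by_contra! hvb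
  obtain ⟨n, hn⟩ := pow_unbounded_of_one_lt (b / (C * v 0)) hρ
  rw [div_lt_iff₀ (mul_pos hC hv0)] at hn
  linarith [hgrow n fun k _ => hvb k, hvb n]

end Growth

theorem exists_forall_le_and_lt_succ {X : Type*} [LinearOrder X] {v : ℕ → X} {b : X}
    (hv0 : v 0 ≤ b) (hv : ∃ n, b < v n) : ∃ n, (∀ k ≤ n, v k ≤ b) ∧ b < v (n + 1) := by
  have hfind : Nat.find hv ≠ 0 := fun h => hv0.not_gt (h ▸ Nat.find_spec hv)
  obtain ⟨n, hn⟩ := Nat.exists_eq_add_one_of_ne_zero hfind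
  exact ⟨n, fun k hk => not_lt.1 (Nat.find_min hv (by omega)), hn ▸ Nat.find_spec hv⟩

theorem integral_div_id_le_of_orbit {ρ b C : ℝ} {α : ℝ → ℝ} {v : ℕ → ℝ} (hρ : 1 < ρ) (hC : 0 < C)
    (hα : MonotoneOn α (Ioc 0 b)) (hα_nonneg : ∀ s ∈ Ioc 0 b, 0 ≤ α s) (hv0 : v 0 ∈ Ioc 0 b)
    (hstep : ∀ k, v k ∈ Ioc 0 b → v (k + 1) ≤ (ρ - α (v k)) * v k)
    (hgrow : ∀ n, (∀ k ≤ n, v k ≤ b) → C * ρ ^ n * v 0 ≤ v n) :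
    ∫ s in v 0..b, α s / s ≤ (2 * α b - ρ * Real.log C) * Real.log ρ := by
  have hρ0 : 0 < ρ := one_pos.trans hρ
  have hb : b ∈ Ioc 0 b := right_mem_Ioc.2 (hv0.1.trans_le hv0.2)
  obtain ⟨n, hvb, hexit⟩ :=
    exists_forall_le_and_lt_succ hv0.2 (exists_lt_of_pow_mul_le hρ hC hv0.1 hgrow)
  have hv : ∀ k ≤ n, v k ∈ Ioc 0 b := fun k hk =>
    ⟨(mul_pos (mul_pos hC (pow_pos hρ0 k)) hv0.1).trans_le
      (hgrow k fun j hj => hvb j (hj.trans hk)), hvb k hk⟩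
  have hstep_le : ∀ k ≤ n, v (k + 1) ≤ ρ * v k := fun k hk => (hstep k (hv k hk)).trans <|
    mul_le_mul_of_nonneg_right (sub_le_self _ (hα_nonneg _ (hv k hk))) (hv k hk).1.le
  have hmono : ∀ {x y}, x ∈ Ioc 0 b → y ∈ Ioc 0 b → MonotoneOn α (uIcc x y) := fun hx hy =>
    hα.mono (ordConnected_Ioc.uIcc_subset hx hy)
  have hvn := hv n le_rfl
  have hsum : ∑ k ∈ Finset.range n, α (v (k + 1)) ≤ α b - ρ * Real.log C := by
    have hsum_shift := Finset.sum_range_succ' (fun k => α (v k)) n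
    rw [Finset.sum_range_succ] at hsum_shift
    have hsum_le := sum_le_neg_mul_log_of_pow_mul_le (β := fun k => α (v k)) hρ0 hC hv0.1
      (fun k hk => (hv k hk.le).1.le) (fun k hk => hstep k (hv k hk.le)) (hgrow n hvb)
    linarith [hα hvn hb hvn.2, hα_nonneg _ hv0]
  calc ∫ s in v 0..b, α s / s
      = (∫ s in v 0..v n, α s / s) + ∫ s in v n..b, α s / s :=
        (intervalIntegral.integral_add_adjacent_intervals
          (intervalIntegrable_div_id_of_monotoneOn (hmono hv0 hvn) hv0.1 hvn.1)
          (intervalIntegrable_div_id_of_monotoneOn (hmono hvn hb) hvn.1 hb.1)).symm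
    _ ≤ (∑ k ∈ Finset.range n, α (v (k + 1))) * Real.log ρ + α b * Real.log ρ :=
        add_le_add
          (integral_div_id_le_sum_mul_log hα hα_nonneg hv fun k hk => hstep_le k hk.le)
          (integral_div_id_le_mul_log_of_le_mul (hmono hvn hb) hvn.1 hb.1 (hα_nonneg b hb)
            (hexit.le.trans (hstep_le n le_rfl)))
    _ ≤ (α b - ρ * Real.log C) * Real.log ρ + α b * Real.log ρ := by
        gcongr
        exact Real.log_nonneg hρ.le
    _ = (2 * α b - ρ * Real.log C) * Real.log ρ := by ring

section Instability

variable {E : Type*} [SeminormedAddCommGroup E] {F : E → E} {α : ℝ → ℝ} {ρ a b : ℝ}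

/-- Exponential instability of the equilibrium `0` of `u (n + 1) = F (u n)` at rate `ρ`, in a
seminormed group: arbitrarily close to `0` there start orbits growing at least like `C * ρ ^ n`
for as long as they have not left the closed ball of radius `ε`. -/
def IsExponentiallyUnstable (F : E → E) (ρ : ℝ) : Prop :=
  ∃ ε > (0 : ℝ), ∃ C > (0 : ℝ), ∀ δ > (0 : ℝ), ∃ u : ℕ → E,
    (∀ n, u (n + 1) = F (u n)) ∧ 0 < ‖u 0‖ ∧ ‖u 0‖ ≤ δ ∧
    ∀ n : ℕ, (∀ k ≤ n, ‖u k‖ ≤ ε) → C * ρ ^ n * ‖u 0‖ ≤ ‖u n‖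

theorem IsExponentiallyUnstable.exists_frequently_integral_le (hρ : 1 < ρ) (ha : 0 < a)
    (hα : MonotoneOn α (Ioc 0 a)) (hα_nonneg : ∀ s ∈ Ioc 0 a, 0 ≤ α s)
    (hF : ∀ᶠ x in 𝓝 0, ‖F x‖ ≤ (ρ - α ‖x‖) * ‖x‖) (hinst : IsExponentiallyUnstable F ρ) :
    ∃ b ∈ Ioc 0 a, ∃ I, ∃ᶠ x in 𝓝 0, x ∈ Ioc 0 b ∧ ∫ s in x..b, α s / s ≤ I := by
  obtain ⟨ε, hε, C, hC, hinst⟩ := hinst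
  obtain ⟨r, hr, hF⟩ := Metric.nhds_basis_closedBall.eventually_iff.1 hF
  obtain ⟨b, hb, hb_le⟩ : ∃ b > 0, b ≤ min (min ε a) r :=
    ⟨_, lt_min (lt_min hε ha) hr, le_rfl⟩
  obtain ⟨⟨hbε, hba⟩, hbr⟩ : (b ≤ ε ∧ b ≤ a) ∧ b ≤ r := by simpa only [le_min_iff] using hb_le
  have hsub : Ioc 0 b ⊆ Ioc 0 a := Ioc_subset_Ioc_right hba
  refine ⟨b, ⟨hb, hba⟩, (2 * α b - ρ * Real.log C) * Real.log ρ,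
    Metric.nhds_basis_closedBall.frequently_iff.2 fun δ hδ => ?_⟩
  obtain ⟨u, hu, hu0, hu0_le, hgrow⟩ := hinst (min δ b) (lt_min hδ hb)
  obtain ⟨hu0δ, hu0b⟩ := le_min_iff.1 hu0_le
  have hstep : ∀ k, ‖u k‖ ∈ Ioc 0 b → ‖u (k + 1)‖ ≤ (ρ - α ‖u k‖) * ‖u k‖ := fun k hk =>
    hu k ▸ hF (mem_closedBall_zero_iff.2 (hk.2.trans hbr))
  exact ⟨‖u 0‖, by simpa using hu0δ, ⟨hu0, hu0b⟩,
    integral_div_id_le_of_orbit (v := fun k => ‖u k‖) hρ hC (hα.mono hsub)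
      (fun s hs => hα_nonneg s (hsub hs)) ⟨hu0, hu0b⟩ hstep
      fun n hn => hgrow n fun k hk => (hn k hk).trans hbε⟩

theorem integrableOn_div_id_of_frequently_integral_le {I : ℝ} (hα : MonotoneOn α (Ioc 0 a))
    (hα_nonneg : ∀ s ∈ Ioc 0 a, 0 ≤ α s) (hb : b ∈ Ioc 0 a)
    (hI : ∃ᶠ x in 𝓝 0, x ∈ Ioc 0 b ∧ ∫ s in x..b, α s / s ≤ I) :
    IntegrableOn (fun s => α s / s) (Ioc 0 a) := by
  have hint : ∀ {x y}, x ∈ Ioc 0 a → y ∈ Ioc 0 a →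
      IntervalIntegrable (fun s => α s / s) volume x y := fun hx hy =>
    intervalIntegrable_div_id_of_monotoneOn
      (hα.mono (ordConnected_Ioc.uIcc_subset hx hy)) hx.1 hy.1
  have hnear : IntegrableOn (fun s => α s / s) (Ioc 0 b) := by
    refine integrableOn_Ioc_of_frequently_integral_norm_le (I := I) (hI.mono ?_)
    rintro x ⟨hx, hxI⟩
    refine ⟨(hint ⟨hx.1, hx.2.trans hb.2⟩ hb).1, ?_⟩
    rw [intervalIntegral.integral_of_le hx.2] at hxI
    refine (setIntegral_congr_fun measurableSet_Ioc fun s hs => ?_).trans_le hxI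
    have hs0 : 0 < s := hx.1.trans hs.1
    exact Real.norm_of_nonneg (div_nonneg (hα_nonneg s ⟨hs0, hs.2.trans hb.2⟩) hs0.le)
  rw [← Ioc_union_Ioc_eq_Ioc hb.1.le hb.2]
  exact hnear.union (hint hb (right_mem_Ioc.2 (hb.1.trans_le hb.2))).1

theorem stmt_14_general (hρ : 1 < ρ) (ha : 0 < a) (hα : MonotoneOn α (Ioc 0 a))
    (hα_nonneg : ∀ s ∈ Ioc 0 a, 0 ≤ α s) (hF : ∀ᶠ x in 𝓝 0, ‖F x‖ ≤ (ρ - α ‖x‖) * ‖x‖)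
    (hinst : IsExponentiallyUnstable F ρ) :
    IntegrableOn (fun s => α s / s) (Ioc 0 a) := by
  obtain ⟨b, hb, I, hI⟩ := hinst.exists_frequently_integral_le hρ ha hα hα_nonneg hF
  exact integrableOn_div_id_of_frequently_integral_le hα hα_nonneg hb hI

end Instability

theorem eventually_abs_mul_sub_mul_le {α : ℝ → ℝ} {ρ : ℝ} (hρ : 0 < ρ)
    (hα : Tendsto α (𝓝[>] 0) (𝓝 0)) :
    ∀ᶠ u in 𝓝 (0 : ℝ), |ρ * u - α |u| * u| ≤ (ρ - α |u|) * |u| := by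
  obtain ⟨r, hr, hαr⟩ := (nhdsGT_basis (0 : ℝ)).eventually_iff.1 (hα.eventually_le_const hρ)
  filter_upwards [Metric.ball_mem_nhds (0 : ℝ) hr] with u hu
  rcases eq_or_ne u 0 with rfl | hu0
  · simp
  · have hαu : α |u| ≤ ρ := hαr ⟨abs_pos.2 hu0, by simpa using hu⟩
    rw [← sub_mul, abs_mul, abs_of_nonneg (sub_nonneg.2 hαu)]

/-- for the scalar map `𝓕(u) = ρu - α(|u|)u` with `α` nondecreasing
on `[0,a]` and `α(s) → 0` as `s → 0⁺`, exponential instability of the origin at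
the linear rate `ρ` implies the integrability condition `∫₀^a α(s)/s ds < ∞`. -/
theorem stmt_14 (ρ a : ℝ) (hρ : 1 < ρ) (ha : 0 < a)
    (α : ℝ → ℝ) (hα_mono : MonotoneOn α (Set.Icc 0 a))
    (hα_nonneg : ∀ s : ℝ, 0 ≤ s → 0 ≤ α s)
    (hα_lim : Filter.Tendsto α (nhdsWithin 0 (Set.Ioi 0)) (nhds 0))
    (hinst : ∃ ε > (0 : ℝ), ∃ C > (0 : ℝ), ∀ δ > (0 : ℝ), ∃ u : ℕ → ℝ,
      (∀ n, u (n + 1) = ρ * u n - α |u n| * u n) ∧ 0 < |u 0| ∧ |u 0| ≤ δ ∧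
      ∀ n : ℕ, (∀ k ≤ n, |u k| ≤ ε) → C * ρ ^ n * |u 0| ≤ |u n|) :
    IntegrableOn (fun s => α s / s) (Set.Ioc 0 a) :=
  stmt_14_general hρ ha (hα_mono.mono Ioc_subset_Icc_self) (fun s hs => hα_nonneg s hs.1.le)
    (eventually_abs_mul_sub_mul_le (one_pos.trans hρ) hα_lim) hinst
end

section
/- Let B₁ and B₂ be Banach spaces with B₁ ≠ {0}, let ρ > 1, and let L₁ : B₁ → B₁ and L₂ : B₂ → B₂ be bounded linear operators with ‖L₁v‖ ≥ ρ‖v‖ for all v ∈ B₁ and ‖L₂w‖ ≤ ρ‖w‖ for all w ∈ B₂. Let 𝓝₁ : B₁ × B₂ → B₁ and 𝓝₂ : B₁ × B₂ → B₂ satisfy 𝓝₁(0,0) = 0 and 𝓝₂(0,0) = 0, and define α(r) = sup{ (‖𝓝₁(v,w)‖ + ‖𝓝₂(v,w)‖)/‖v‖ : 0 < ‖v‖ ≤ r, ‖w‖ ≤ ‖v‖ }. If for some a > 0 the integrability condition ∫₀^a α(s)/s ds < ∞ holds, then the origin (0,0) is an unstable equilibrium (in the sense of Lyapunov) of the system v_{n+1}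 = L₁v_n + 𝓝₁(v_n,w_n), w_{n+1} = L₂w_n + 𝓝₂(v_n,w_n). -/
open scoped ENNReal

/-!
Let `V(t)` be a large multiple of `∫₀ᵗ α(s)/s ds`. Wherever `V` is small, `α` is small too, so
that on the cone `‖w‖ ≤ V(‖v‖) ‖v‖` one step stretches `‖v‖` by a factor `σ > 1`. The same step
raises the ratio `‖w‖ / ‖v‖` by at most `2 α(‖v‖)`, while the stretching raises `V` by at least that
much, because `α` is monotone and hence `∫ α(s)/s ds` over `[‖v‖, σ‖v‖]` is at least
`(1 - σ⁻¹) α(‖v‖)`. The cone is thus invariant near the origin, and `‖v‖` grows geometrically along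
its orbits until they leave a fixed neighbourhood.
-/

open Set Filter MeasureTheory
open scoped Topology

/-- The Dini integral `∫₀ᵗ α(s)/s ds` of a modulus `α`. Its finiteness for some `t > 0` is the
integrability condition on the nonlinearity. -/
noncomputable def diniIntegral (α : ℝ → ℝ≥0∞) (t : ℝ) : ℝ≥0∞ :=
  ∫⁻ s in Ioc 0 t, α s / ENNReal.ofReal s

lemma monotone_diniIntegral (α : ℝ → ℝ≥0∞) : Monotone (diniIntegral α) := fun _ _ hst =>
  lintegral_mono_set (Ioc_subset_Ioc_right hst)

lemma diniIntegral_add_mul_le {α : ℝ → ℝ≥0∞} (hα : Monotone α) {σ x : ℝ} (hσ : 1 ≤ σ)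
    (hx : 0 < x) :
    diniIntegral α x + ENNReal.ofReal (1 - σ⁻¹) * α x ≤ diniIntegral α (σ * x) := by
  have hσx : 0 < σ * x := by positivity
  calc diniIntegral α x + ENNReal.ofReal (1 - σ⁻¹) * α x
      = diniIntegral α x + ∫⁻ _ in Ioc x (σ * x), α x / ENNReal.ofReal (σ * x) := by
        have hlen : 1 - σ⁻¹ = (σ * x - x) / (σ * x) := by field_simp
        rw [setLIntegral_const, Real.volume_Ioc, hlen, ENNReal.ofReal_div_of_pos hσx,
          ENNReal.mul_comm_div, mul_comm]
    _ ≤ diniIntegral α x + ∫⁻ s in Ioc x (σ * x), α s / ENNReal.ofReal s := by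
        gcongr diniIntegral α x + ?_
        exact setLIntegral_mono' measurableSet_Ioc fun s hs =>
          ENNReal.div_le_div (hα hs.1.le) (ENNReal.ofReal_le_ofReal hs.2)
    _ = diniIntegral α (σ * x) := by
        rw [diniIntegral, diniIntegral, ← lintegral_union measurableSet_Ioc
          (Ioc_disjoint_Ioc_of_le le_rfl),
          Ioc_union_Ioc_eq_Ioc hx.le (le_mul_of_one_le_left hx.le hσ)]

lemma tendsto_diniIntegral_nhdsGT_zero {α : ℝ → ℝ≥0∞} {a : ℝ} (ha : 0 < a)
    (hfin : diniIntegral α a ≠ ⊤) : Tendsto (diniIntegral α) (𝓝[>] 0) (𝓝 0) := by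
  have hvol : Tendsto (fun t : ℝ => volume.restrict (Ioc 0 a) (Ioc 0 t)) (𝓝[>] 0) (𝓝 0) := by
    refine tendsto_of_tendsto_of_tendsto_of_le_of_le tendsto_const_nhds
      (h := fun t => ENNReal.ofReal t) ?_ (fun _ => zero_le) fun t => ?_
    · exact ENNReal.ofReal_zero ▸
        (ENNReal.continuous_ofReal.tendsto 0).mono_left nhdsWithin_le_nhds
    · simpa only [Real.volume_Ioc, sub_zero] using
        Measure.restrict_apply_le (μ := volume) (Ioc 0 a) (Ioc 0 t)
  refine (tendsto_setLIntegral_zero hfin hvol).congr' ?_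
  filter_upwards [Ioo_mem_nhdsGT ha] with t ht
  rw [diniIntegral, Measure.restrict_restrict measurableSet_Ioc,
    inter_eq_left.2 (Ioc_subset_Ioc_right ht.2.le)]

/-- Opening of the invariant cone at height `t`. The factor `2 / (1 - σ⁻¹)` is chosen so that
stretching `t` by `σ` raises it by at least `2 * α t`. -/
noncomputable def diniSlope (σ : ℝ) (α : ℝ → ℝ≥0∞) (t : ℝ) : ℝ≥0∞ :=
  2 / ENNReal.ofReal (1 - σ⁻¹) * diniIntegral α t

lemma monotone_diniSlope (σ : ℝ) (α : ℝ → ℝ≥0∞) : Monotone (diniSlope σ α) :=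
  (monotone_diniIntegral α).const_mul' _

lemma ofReal_one_sub_inv_ne_zero {σ : ℝ} (hσ : 1 < σ) : ENNReal.ofReal (1 - σ⁻¹) ≠ 0 :=
  (ENNReal.ofReal_pos.2 (sub_pos.2 (inv_lt_one_of_one_lt₀ hσ))).ne'

lemma diniSlope_add_two_mul_le {α : ℝ → ℝ≥0∞} (hα : Monotone α) {σ x y : ℝ} (hσ : 1 < σ)
    (hx : 0 < x) (hxy : σ * x ≤ y) :
    diniSlope σ α x + 2 * α x ≤ diniSlope σ α y := by
  calc diniSlope σ α x + 2 * α x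
      = 2 / ENNReal.ofReal (1 - σ⁻¹) *
          (diniIntegral α x + ENNReal.ofReal (1 - σ⁻¹) * α x) := by
        rw [mul_add, ← mul_assoc,
          ENNReal.div_mul_cancel (ofReal_one_sub_inv_ne_zero hσ) ENNReal.ofReal_ne_top, diniSlope]
    _ ≤ diniSlope σ α (σ * x) := by
        rw [diniSlope]
        gcongr
        exact diniIntegral_add_mul_le hα hσ.le hx
    _ ≤ diniSlope σ α y := monotone_diniSlope σ α hxy

lemma tendsto_diniSlope_nhdsGT_zero {α : ℝ → ℝ≥0∞} {σ a : ℝ} (hσ : 1 < σ) (ha : 0 < a)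
    (hfin : diniIntegral α a ≠ ⊤) : Tendsto (diniSlope σ α) (𝓝[>] 0) (𝓝 0) := by
  have hfactor : 2 / ENNReal.ofReal (1 - σ⁻¹) ≠ ⊤ :=
    ENNReal.div_ne_top ENNReal.ofNat_ne_top (ofReal_one_sub_inv_ne_zero hσ)
  simpa only [mul_zero] using! ENNReal.Tendsto.const_mul
    (tendsto_diniIntegral_nhdsGT_zero ha hfin) (.inr hfactor)

lemma exists_le_iterate_of_expanding {X : Type*} {T : X → X} {K : Set X} {φ : X → ℝ} {σ ε : ℝ}
    (hσ : 1 < σ) (hK : ∀ q ∈ K, 0 < φ q → φ q < ε → σ * φ q ≤ φ (T q) ∧ T q ∈ K)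
    {q : X} (hq : q ∈ K) (hφq : 0 < φ q) : ∃ n, ε ≤ φ (T^[n] q) := by
  by_contra! hsmall
  have hgrowth : ∀ n, σ ^ n * φ q ≤ φ (T^[n] q) ∧ T^[n] q ∈ K := by
    intro n
    induction n with
    | zero => simpa using hq
    | succ n ih =>
      obtain ⟨hgrow, hmem⟩ := ih
      have hpos : 0 < φ (T^[n] q) := lt_of_lt_of_le (by positivity) hgrow
      obtain ⟨hexpand, hmem'⟩ := hK _ hmem hpos (hsmall n)
      rw [Function.iterate_succ_apply']
      refine ⟨?_, hmem'⟩
      calc σ ^ (n + 1) * φ q = σ * (σ ^ n * φ q) := by ring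
        _ ≤ σ * φ (T^[n] q) := by gcongr
        _ ≤ φ (T (T^[n] q)) := hexpand
  obtain ⟨n, hn⟩ := pow_unbounded_of_one_lt (ε / φ q) hσ
  rw [div_lt_iff₀ hφq] at hn
  exact (hn.trans_le (hgrowth n).1).not_gt (hsmall n)

lemma slope_step_le {ρ e z x y x' y' : ℝ} (he : 0 ≤ e) (heρ : e ≤ ρ - 1) (hz : 0 ≤ z) (hz1 : z ≤ 1)
    (hx : 0 ≤ x) (hy : y ≤ z * x) (hx' : ρ * x ≤ x' + e * x)
    (hy' : y' ≤ ρ * y + e * x) : y' ≤ (z + 2 * e) * x' := by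
  have hρ : 0 ≤ ρ := by linarith
  have hslope : ρ * z + e ≤ (z + 2 * e) * (ρ - e) := by
    have hrem : 0 ≤ e * (2 * (ρ - 1 - e) + (1 - z)) := by
      have := sub_nonneg.2 heρ
      have := sub_nonneg.2 hz1
      positivity
    linear_combination hrem
  calc y' ≤ ρ * (z * x) + e * x := hy'.trans (by gcongr)
    _ = (ρ * z + e) * x := by ring
    _ ≤ (z + 2 * e) * (ρ - e) * x := by gcongr
    _ = (z + 2 * e) * (ρ * x - e * x) := by ring
    _ ≤ (z + 2 * e) * x' := by
      gcongr
      exact sub_le_iff_le_add.2 hx'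

section Cone

variable {E F : Type*} [SeminormedAddCommGroup E] [SeminormedAddCommGroup F]

/-- A map of `E × F` that, on the cone `‖w‖ ≤ ‖v‖`, stretches the first component at least by `ρ`
and the second at most by `ρ`, up to errors of size `α ‖v‖ * ‖v‖`. -/
structure IsConeExpanding (ρ : ℝ) (α : ℝ → ℝ≥0∞) (T : E × F → E × F) : Prop where
  mul_enorm_fst_le : ∀ q, 0 < ‖q.1‖ → ‖q.2‖ ≤ ‖q.1‖ →
    ENNReal.ofReal ρ * ‖q.1‖ₑ ≤ ‖(T q).1‖ₑ + α ‖q.1‖ * ‖q.1‖ₑ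
  enorm_snd_le : ∀ q, 0 < ‖q.1‖ → ‖q.2‖ ≤ ‖q.1‖ →
    ‖(T q).2‖ₑ ≤ ENNReal.ofReal ρ * ‖q.2‖ₑ + α ‖q.1‖ * ‖q.1‖ₑ

variable (E F) in
/-- The region `‖w‖ ≤ V(‖v‖) ‖v‖`, with `V` the Dini slope: a cone that opens up with the distance
from the origin, so that it absorbs the errors of a cone expanding map. -/
def diniCone (σ : ℝ) (α : ℝ → ℝ≥0∞) : Set (E × F) :=
  {q | ‖q.2‖ₑ ≤ diniSlope σ α ‖q.1‖ * ‖q.1‖ₑ}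

namespace IsConeExpanding

variable {ρ : ℝ} {α : ℝ → ℝ≥0∞} {T : E × F → E × F} {q : E × F}

lemma mul_norm_fst_le (hT : IsConeExpanding ρ α T) (hρ : 0 ≤ ρ) (hq : 0 < ‖q.1‖)
    (hcone : ‖q.2‖ ≤ ‖q.1‖) (hα : α ‖q.1‖ ≠ ⊤) :
    ρ * ‖q.1‖ ≤ ‖(T q).1‖ + (α ‖q.1‖).toReal * ‖q.1‖ := by
  simpa [ENNReal.toReal_add, ENNReal.mul_ne_top, hα, hρ] using
    ENNReal.toReal_mono (by finiteness) (hT.mul_enorm_fst_le q hq hcone)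

lemma norm_snd_le (hT : IsConeExpanding ρ α T) (hρ : 0 ≤ ρ) (hq : 0 < ‖q.1‖)
    (hcone : ‖q.2‖ ≤ ‖q.1‖) (hα : α ‖q.1‖ ≠ ⊤) :
    ‖(T q).2‖ ≤ ρ * ‖q.2‖ + (α ‖q.1‖).toReal * ‖q.1‖ := by
  simpa [ENNReal.toReal_add, ENNReal.mul_ne_top, hα, hρ] using
    ENNReal.toReal_mono (by finiteness) (hT.enorm_snd_le q hq hcone)

lemma stretch_mul_norm_fst_le (hT : IsConeExpanding ρ α T) {σ : ℝ} (hρ : 0 ≤ ρ) (hσρ : σ ≤ ρ)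
    (hq : 0 < ‖q.1‖) (hcone : ‖q.2‖ ≤ ‖q.1‖) (hα : α ‖q.1‖ ≤ ENNReal.ofReal (ρ - σ)) :
    σ * ‖q.1‖ ≤ ‖(T q).1‖ := by
  have herr : (α ‖q.1‖).toReal ≤ ρ - σ :=
    ENNReal.toReal_le_of_le_ofReal (sub_nonneg.2 hσρ) hα
  have hfst := hT.mul_norm_fst_le hρ hq hcone
    (ne_top_of_le_ne_top ENNReal.ofReal_ne_top hα)
  linarith [mul_le_mul_of_nonneg_right herr hq.le]

lemma enorm_snd_le_mul_enorm_fst (hT : IsConeExpanding ρ α T) (hρ : 1 ≤ ρ) (hq : 0 < ‖q.1‖)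
    {z : ℝ≥0∞} (hz : z ≤ 1) (hcone : ‖q.2‖ₑ ≤ z * ‖q.1‖ₑ)
    (hα : α ‖q.1‖ ≤ ENNReal.ofReal (ρ - 1)) :
    ‖(T q).2‖ₑ ≤ (z + 2 * α ‖q.1‖) * ‖(T q).1‖ₑ := by
  have hz_top : z ≠ ⊤ := ne_top_of_le_ne_top ENNReal.one_ne_top hz
  have hα_top : α ‖q.1‖ ≠ ⊤ := ne_top_of_le_ne_top ENNReal.ofReal_ne_top hα
  have hρ0 : 0 ≤ ρ := zero_le_one.trans hρ
  have hz_real : z.toReal ≤ 1 := ENNReal.toReal_mono ENNReal.one_ne_top hz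
  have hcone_real : ‖q.2‖ ≤ z.toReal * ‖q.1‖ := by
    simpa only [ENNReal.toReal_mul, toReal_enorm] using
      ENNReal.toReal_mono (by finiteness) hcone
  have hle : ‖q.2‖ ≤ ‖q.1‖ := hcone_real.trans (mul_le_of_le_one_left hq.le hz_real)
  have hstep := slope_step_le ENNReal.toReal_nonneg
    (ENNReal.toReal_le_of_le_ofReal (sub_nonneg.2 hρ) hα) ENNReal.toReal_nonneg hz_real hq.le
    hcone_real (hT.mul_norm_fst_le hρ0 hq hle hα_top) (hT.norm_snd_le hρ0 hq hle hα_top)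
  rw [← ENNReal.toReal_le_toReal enorm_ne_top (by finiteness)]
  simpa [ENNReal.toReal_add, ENNReal.mul_ne_top, hz_top, hα_top] using hstep

lemma le_norm_fst_and_mem_diniCone (hT : IsConeExpanding ρ α T) {σ b : ℝ} (hσ : 1 < σ)
    (hσρ : σ ≤ ρ) (hα : Monotone α) (hb1 : diniSlope σ α b ≤ 1)
    (hbρ : diniSlope σ α b ≤ 2 * ENNReal.ofReal (ρ - σ))
    (hq : q ∈ diniCone E F σ α) (hpos : 0 < ‖q.1‖) (hqb : σ * ‖q.1‖ ≤ b) :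
    σ * ‖q.1‖ ≤ ‖(T q).1‖ ∧ T q ∈ diniCone E F σ α := by
  have hρ : 1 ≤ ρ := hσ.le.trans hσρ
  have hslope : diniSlope σ α ‖q.1‖ + 2 * α ‖q.1‖ ≤ diniSlope σ α b :=
    diniSlope_add_two_mul_le hα hσ hpos hqb
  have hslope_one : diniSlope σ α ‖q.1‖ ≤ 1 := (le_self_add.trans hslope).trans hb1
  have herr : α ‖q.1‖ ≤ ENNReal.ofReal (ρ - σ) :=
    (ENNReal.mul_le_mul_iff_right two_ne_zero ENNReal.ofNat_ne_top).1
      ((le_add_self.trans hslope).trans hbρ)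
  have hle : ‖q.2‖ₑ ≤ ‖q.1‖ₑ := hq.trans (mul_le_of_le_one_left' hslope_one)
  have hexpand := hT.stretch_mul_norm_fst_le (zero_le_one.trans hρ) hσρ hpos
    (enorm_le_iff_norm_le.1 hle) herr
  refine ⟨hexpand, ?_⟩
  calc ‖(T q).2‖ₑ ≤ (diniSlope σ α ‖q.1‖ + 2 * α ‖q.1‖) * ‖(T q).1‖ₑ :=
        hT.enorm_snd_le_mul_enorm_fst hρ hpos hslope_one hq
          (herr.trans (ENNReal.ofReal_le_ofReal (by linarith)))
    _ ≤ diniSlope σ α ‖(T q).1‖ * ‖(T q).1‖ₑ := by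
        gcongr
        exact diniSlope_add_two_mul_le hα hσ hpos hexpand

theorem exists_forall_mem_diniCone_exists_le_norm_fst_iterate (hT : IsConeExpanding ρ α T)
    {σ a : ℝ} (hσ : 1 < σ) (hσρ : σ < ρ) (hα : Monotone α) (ha : 0 < a)
    (hfin : diniIntegral α a ≠ ⊤) :
    ∃ ε > 0, ∀ q ∈ diniCone E F σ α, 0 < ‖q.1‖ → ∃ n, ε ≤ ‖(T^[n] q).1‖ := by
  have hsmall : ∀ᶠ t in 𝓝[>] 0, diniSlope σ α t < min 1 (2 * ENNReal.ofReal (ρ - σ)) :=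
    (tendsto_diniSlope_nhdsGT_zero hσ ha hfin).eventually_lt_const
      (lt_min one_pos (by simpa using hσρ))
  obtain ⟨b, hb, hb0⟩ := (hsmall.and self_mem_nhdsWithin).exists
  obtain ⟨hb1, hbρ⟩ := lt_min_iff.1 hb
  refine ⟨b / σ, div_pos hb0 (by linarith), fun q hq hpos => ?_⟩
  refine exists_le_iterate_of_expanding (φ := fun q => ‖q.1‖) hσ (fun q hq hpos hlt => ?_) hq hpos
  exact hT.le_norm_fst_and_mem_diniCone hσ hσρ.le hα hb1.le hbρ.le hq hpos
    ((lt_div_iff₀' (by linarith)).1 hlt).le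

end IsConeExpanding

/-- The map `(v, w) ↦ (L₁ v + N₁(v, w), L₂ w + N₂(v, w))` whose orbits are the solutions of the
coupled system. -/
def coupledMap (L₁ : E → E) (L₂ : F → F) (N₁ : E × F → E) (N₂ : E × F → F) (q : E × F) : E × F :=
  (L₁ q.1 + N₁ q, L₂ q.2 + N₂ q)

/-- The size `α(r)` of the nonlinearity `(N₁, N₂)`, relative to `‖v‖`, in the truncated cone
`0 < ‖v‖ ≤ r`, `‖w‖ ≤ ‖v‖`. -/
noncomputable def coneSize (N₁ : E × F → E) (N₂ : E × F → F) (r : ℝ) : ℝ≥0∞ :=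
  ⨆ (q : E × F) (_ : 0 < ‖q.1‖ ∧ ‖q.1‖ ≤ r ∧ ‖q.2‖ ≤ ‖q.1‖),
    ENNReal.ofReal ((‖N₁ q‖ + ‖N₂ q‖) / ‖q.1‖)

lemma monotone_coneSize (N₁ : E × F → E) (N₂ : E × F → F) : Monotone (coneSize N₁ N₂) :=
  fun _ _ hrs => iSup_mono fun _ => iSup_const_mono fun ⟨hpos, hr, hcone⟩ =>
    ⟨hpos, hr.trans hrs, hcone⟩

lemma enorm_add_enorm_le_coneSize_mul (N₁ : E × F → E) (N₂ : E × F → F) {q : E × F}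
    (hq : 0 < ‖q.1‖) (hcone : ‖q.2‖ ≤ ‖q.1‖) :
    ‖N₁ q‖ₑ + ‖N₂ q‖ₑ ≤ coneSize N₁ N₂ ‖q.1‖ * ‖q.1‖ₑ := by
  have hratio : ENNReal.ofReal ((‖N₁ q‖ + ‖N₂ q‖) / ‖q.1‖) ≤ coneSize N₁ N₂ ‖q.1‖ :=
    le_iSup₂_of_le q ⟨hq, le_rfl, hcone⟩ le_rfl
  calc ‖N₁ q‖ₑ + ‖N₂ q‖ₑ = ENNReal.ofReal ((‖N₁ q‖ + ‖N₂ q‖) / ‖q.1‖) * ‖q.1‖ₑ := by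
        rw [← ofReal_norm q.1, ← ENNReal.ofReal_mul (by positivity), div_mul_cancel₀ _ hq.ne',
          ENNReal.ofReal_add (norm_nonneg _) (norm_nonneg _), ofReal_norm, ofReal_norm]
    _ ≤ coneSize N₁ N₂ ‖q.1‖ * ‖q.1‖ₑ := by gcongr

lemma isConeExpanding_coupledMap {ρ : ℝ} (hρ : 0 ≤ ρ) {L₁ : E → E} {L₂ : F → F}
    (hL₁ : ∀ v, ρ * ‖v‖ ≤ ‖L₁ v‖) (hL₂ : ∀ w, ‖L₂ w‖ ≤ ρ * ‖w‖)
    (N₁ : E × F → E) (N₂ : E × F → F) :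
    IsConeExpanding ρ (coneSize N₁ N₂) (coupledMap L₁ L₂ N₁ N₂) where
  mul_enorm_fst_le q hq hcone := by
    have hN := enorm_add_enorm_le_coneSize_mul N₁ N₂ hq hcone
    calc ENNReal.ofReal ρ * ‖q.1‖ₑ ≤ ‖L₁ q.1‖ₑ := by
          simpa only [ENNReal.ofReal_mul hρ, ofReal_norm] using ENNReal.ofReal_le_ofReal (hL₁ q.1)
      _ ≤ ‖L₁ q.1 + N₁ q‖ₑ + ‖N₁ q‖ₑ := by
          simpa only [add_sub_cancel_right] using enorm_sub_le (a := L₁ q.1 + N₁ q) (b := N₁ q)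
      _ ≤ ‖(coupledMap L₁ L₂ N₁ N₂ q).1‖ₑ + coneSize N₁ N₂ ‖q.1‖ * ‖q.1‖ₑ :=
          add_le_add_right (le_self_add.trans hN) _
  enorm_snd_le q hq hcone := by
    have hN := enorm_add_enorm_le_coneSize_mul N₁ N₂ hq hcone
    calc ‖L₂ q.2 + N₂ q‖ₑ ≤ ‖L₂ q.2‖ₑ + ‖N₂ q‖ₑ := by
          simpa only [enorm_eq_nnnorm, ← ENNReal.coe_add, ENNReal.coe_le_coe] using
            nnnorm_add_le (L₂ q.2) (N₂ q)
      _ ≤ ENNReal.ofReal ρ * ‖q.2‖ₑ + coneSize N₁ N₂ ‖q.1‖ * ‖q.1‖ₑ := by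
          gcongr
          · simpa only [ENNReal.ofReal_mul hρ, ofReal_norm] using
              ENNReal.ofReal_le_ofReal (hL₂ q.2)
          · exact le_add_self.trans hN

end Cone

theorem stmt_15_general {E F : Type*} [NormedAddCommGroup E] [(𝓝[≠] (0 : E)).NeBot]
    [SeminormedAddCommGroup F] {ρ : ℝ} (hρ : 1 < ρ) {L₁ : E → E} {L₂ : F → F}
    (hL₁ : ∀ v, ρ * ‖v‖ ≤ ‖L₁ v‖) (hL₂ : ∀ w, ‖L₂ w‖ ≤ ρ * ‖w‖)
    (N₁ : E × F → E) (N₂ : E × F → F) {a : ℝ} (ha : 0 < a)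
    (hint : diniIntegral (coneSize N₁ N₂) a ≠ ⊤) :
    ∃ ε > (0 : ℝ), ∀ δ > (0 : ℝ), ∃ v : ℕ → E, ∃ w : ℕ → F,
      (∀ n, v (n + 1) = L₁ (v n) + N₁ (v n, w n)) ∧
      (∀ n, w (n + 1) = L₂ (w n) + N₂ (v n, w n)) ∧
      0 < ‖(v 0, w 0)‖ ∧ ‖(v 0, w 0)‖ ≤ δ ∧ ∃ n : ℕ, ε ≤ ‖(v n, w n)‖ := by
  obtain ⟨σ, hσ, hσρ⟩ := exists_between hρ
  have hT := isConeExpanding_coupledMap (zero_le_one.trans hρ.le) hL₁ hL₂ N₁ N₂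
  obtain ⟨ε, hε, hescape⟩ := hT.exists_forall_mem_diniCone_exists_le_norm_fst_iterate hσ hσρ
    (monotone_coneSize N₁ N₂) ha hint
  refine ⟨ε, hε, fun δ hδ => ?_⟩
  obtain ⟨v₀, hv₀, hlt⟩ := exists_enorm_lt E (ENNReal.ofReal_pos.2 hδ).ne'
  have hv₀δ : ‖v₀‖ < δ := by
    rwa [← ofReal_norm, ENNReal.ofReal_lt_ofReal_iff hδ] at hlt
  obtain ⟨n, hn⟩ :=
    hescape (v₀, 0) (by simp [diniCone, enorm_eq_nnnorm]) (norm_pos_iff.2 hv₀)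
  set u : ℕ → E × F := fun n => (coupledMap L₁ L₂ N₁ N₂)^[n] (v₀, 0)
  have hu (n) : u (n + 1) = coupledMap L₁ L₂ N₁ N₂ (u n) := Function.iterate_succ_apply' _ _ _
  have hu₀ : ‖u 0‖ = ‖v₀‖ := by simp [u, Prod.norm_def]
  exact ⟨fun n => (u n).1, fun n => (u n).2, fun n => congr_arg Prod.fst (hu n),
    fun n => congr_arg Prod.snd (hu n), hu₀ ▸ norm_pos_iff.2 hv₀, hu₀ ▸ hv₀δ.le, n,
    hn.trans (norm_fst_le (u n))⟩

/-- instability for the coupled system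
`v_{n+1} = L₁v_n + 𝓝₁(v_n,w_n)`, `w_{n+1} = L₂w_n + 𝓝₂(v_n,w_n)` when
`‖L₁v‖ ≥ ρ‖v‖`, `‖L₂w‖ ≤ ρ‖w‖` with `ρ > 1` and the cone-restricted size `α` of
the nonlinearity satisfies `∫₀^a α(s)/s ds < ∞`. -/
theorem stmt_15 {B₁ B₂ : Type*}
    [NormedAddCommGroup B₁] [NormedSpace ℝ B₁] [CompleteSpace B₁] [Nontrivial B₁]
    [NormedAddCommGroup B₂] [NormedSpace ℝ B₂] [CompleteSpace B₂]
    (ρ : ℝ) (hρ : 1 < ρ)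
    (L₁ : B₁ →L[ℝ] B₁) (L₂ : B₂ →L[ℝ] B₂)
    (hL₁ : ∀ v : B₁, ρ * ‖v‖ ≤ ‖L₁ v‖) (hL₂ : ∀ w : B₂, ‖L₂ w‖ ≤ ρ * ‖w‖)
    (N₁ : B₁ × B₂ → B₁) (N₂ : B₁ × B₂ → B₂)
    (hN₁0 : N₁ (0, 0) = 0) (hN₂0 : N₂ (0, 0) = 0)
    (α : ℝ → ℝ≥0∞)
    (hα : ∀ r : ℝ, α r = ⨆ (q : B₁ × B₂)
      (_ : 0 < ‖q.1‖ ∧ ‖q.1‖ ≤ r ∧ ‖q.2‖ ≤ ‖q.1‖),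
      ENNReal.ofReal ((‖N₁ q‖ + ‖N₂ q‖) / ‖q.1‖))
    (a : ℝ) (ha : 0 < a)
    (hint : ∫⁻ s in Set.Ioc (0 : ℝ) a, α s / ENNReal.ofReal s < ⊤) :
    ∃ ε > (0 : ℝ), ∀ δ > (0 : ℝ), ∃ v : ℕ → B₁, ∃ w : ℕ → B₂,
      (∀ n, v (n + 1) = L₁ (v n) + N₁ (v n, w n)) ∧
      (∀ n, w (n + 1) = L₂ (w n) + N₂ (v n, w n)) ∧
      0 < ‖(v 0, w 0)‖ ∧ ‖(v 0, w 0)‖ ≤ δ ∧ ∃ n : ℕ, ε ≤ ‖(v n, w n)‖ := by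
  obtain rfl : α = coneSize N₁ N₂ := funext hα
  exact stmt_15_general hρ hL₁ hL₂ N₁ N₂ ha hint.ne
end

section
/- Let ρ > 1, let a > 0, let α : [0,a] → [0,∞) be a nondecreasing function with ∫₀^a α(s)/s ds < ∞, and let C > 1/(ρ·ln ρ). Define β(r) = C·r·∫₀^r α(s)/s ds for r ∈ [0,a]. Then there exists r₀ ∈ (0, a/ρ] such that for all r ∈ [0, r₀]: β(r) ≤ r and ρ·β(r) + r·α(r) ≤ β(ρr − r·α(r)). -/
open MeasureTheory

/-!
Put `J r = ∫₀ʳ α s / s ds`, so that `β r = C r J r`, and write `ρ r - r α r = t r` with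
`t = ρ - α r`. As `α` is nondecreasing, `J (t r) ≥ J r + α r log t`, whence
`β (t r) - ρ β r - r α r ≥ r α r (C t log t - C J r - 1)`.
Both `J r` and `α r` tend to `0` as `r → 0⁺`, the latter because
`J r - J (r / 2) ≤ α r log 2 ≤ J (2 r) - J r`; hence the last factor tends to `C ρ log ρ - 1 > 0`.
-/

open Set Filter Topology

section IntegralDivId

variable {x y : ℝ} {f g : ℝ → ℝ}

lemma intervalIntegrable_div_id (hx : 0 < x) (hxy : x ≤ y) (hf : IntervalIntegrable f volume x y) :
    IntervalIntegrable (fun s => f s / s) volume x y := by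
  have h0 : (0 : ℝ) ∉ uIcc x y := notMem_uIcc_of_lt hx (hx.trans_le hxy)
  simpa only [div_eq_mul_inv] using
    hf.mul_continuousOn (continuousOn_inv₀.mono fun s hs => ne_of_mem_of_not_mem hs h0)

lemma integral_const_div_id (c : ℝ) (hx : 0 < x) (hy : 0 < y) :
    ∫ s in x..y, c / s = c * Real.log (y / x) := by
  simp only [div_eq_mul_inv c, intervalIntegral.integral_const_mul, integral_inv_of_pos hx hy]

lemma integral_div_id_mono (hx : 0 < x) (hxy : x ≤ y) (hf : IntervalIntegrable f volume x y)
    (hg : IntervalIntegrable g volume x y) (hfg : ∀ s ∈ Icc x y, f s ≤ g s) :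
    ∫ s in x..y, f s / s ≤ ∫ s in x..y, g s / s :=
  intervalIntegral.integral_mono_on hxy (intervalIntegrable_div_id hx hxy hf)
    (intervalIntegrable_div_id hx hxy hg) fun s hs =>
      div_le_div_of_nonneg_right (hfg s hs) (hx.le.trans hs.1)

lemma mul_log_le_integral_div_id_of_monotoneOn (hx : 0 < x) (hxy : x ≤ y)
    (hf : MonotoneOn f (Icc x y)) : f x * Real.log (y / x) ≤ ∫ s in x..y, f s / s := by
  rw [← integral_const_div_id _ hx (hx.trans_le hxy)]
  exact integral_div_id_mono hx hxy intervalIntegrable_const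
    (MonotoneOn.intervalIntegrable (by rwa [uIcc_of_le hxy]))
    fun s hs => hf (left_mem_Icc.2 hxy) hs hs.1

lemma integral_div_id_le_mul_log_of_monotoneOn (hx : 0 < x) (hxy : x ≤ y)
    (hf : MonotoneOn f (Icc x y)) : ∫ s in x..y, f s / s ≤ f y * Real.log (y / x) := by
  rw [← integral_const_div_id _ hx (hx.trans_le hxy)]
  exact integral_div_id_mono hx hxy (MonotoneOn.intervalIntegrable (by rwa [uIcc_of_le hxy]))
    intervalIntegrable_const fun s hs => hf hs (right_mem_Icc.2 hxy) hs.2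

end IntegralDivId

lemma tendsto_intervalIntegral_nhdsGT_left {E : Type*} [NormedAddCommGroup E] [NormedSpace ℝ E]
    {μ : Measure ℝ} [NullSingletonClass μ] {f : ℝ → E} {a b : ℝ} (hab : a < b)
    (hf : IntervalIntegrable f μ a b) :
    Tendsto (fun x => ∫ s in a..x, f s ∂μ) (𝓝[>] a) (𝓝 0) := by
  have hcont := intervalIntegral.continuousOn_primitive_interval' hf left_mem_uIcc a left_mem_uIcc
  rw [ContinuousWithinAt, intervalIntegral.integral_same, uIcc_of_le hab.le] at hcont
  exact hcont.mono_left (nhdsWithin_le_of_mem (Icc_mem_nhdsGT hab))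

lemma tendsto_intervalIntegral_of_tendsto_nhdsGT {ι E : Type*} [NormedAddCommGroup E]
    [NormedSpace ℝ E] {μ : Measure ℝ} [NullSingletonClass μ] {f : ℝ → E} {a b : ℝ} (hab : a < b)
    (hf : IntervalIntegrable f μ a b) {l : Filter ι} {u v : ι → ℝ} (hu : Tendsto u l (𝓝[>] a))
    (hv : Tendsto v l (𝓝[>] a)) : Tendsto (fun i => ∫ s in u i..v i, f s ∂μ) l (𝓝 0) := by
  have hprim := tendsto_intervalIntegral_nhdsGT_left hab hf
  have hdiff := (hprim.comp hv).sub (hprim.comp hu)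
  rw [sub_zero] at hdiff
  have hsub : ∀ {c}, c ∈ Ioc a b → IntervalIntegrable f μ a c := fun hc =>
    hf.mono_set (uIcc_subset_uIcc_left (Icc_subset_uIcc (Ioc_subset_Icc_self hc)))
  have hab_mem : Ioc a b ∈ 𝓝[>] a := Ioc_mem_nhdsGT hab
  refine hdiff.congr' ?_
  filter_upwards [hu hab_mem, hv hab_mem] with i hui hvi
  exact intervalIntegral.integral_interval_sub_left (hsub hvi) (hsub hui)

lemma tendsto_const_mul_nhdsGT_zero {𝕜 : Type*} [Field 𝕜] [LinearOrder 𝕜] [IsStrictOrderedRing 𝕜]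
    [TopologicalSpace 𝕜] [OrderTopology 𝕜] {c : 𝕜} (hc : 0 < c) :
    Tendsto (fun r => c * r) (𝓝[>] 0) (𝓝[>] 0) :=
  tendsto_iff_comap.2 (comap_mulLeft_nhdsGT_zero hc).ge

lemma tendsto_nhdsGT_zero_of_monotoneOn_of_intervalIntegrable_div_id {f : ℝ → ℝ} {a : ℝ}
    (ha : 0 < a) (hf : MonotoneOn f (Ioc 0 a))
    (hint : IntervalIntegrable (fun s => f s / s) volume 0 a) :
    Tendsto f (𝓝[>] 0) (𝓝 0) := by
  have hlog : 0 < Real.log 2 := Real.log_pos one_lt_two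
  have hhalf := (tendsto_intervalIntegral_of_tendsto_nhdsGT ha hint
    (tendsto_const_mul_nhdsGT_zero one_half_pos) tendsto_id).div_const (Real.log 2)
  have hdouble := (tendsto_intervalIntegral_of_tendsto_nhdsGT ha hint tendsto_id
    (tendsto_const_mul_nhdsGT_zero two_pos)).div_const (Real.log 2)
  rw [zero_div] at hhalf hdouble
  have hmem : ∀ᶠ r in 𝓝[>] (0 : ℝ), r ∈ Ioo 0 (a / 2) := Ioo_mem_nhdsGT (half_pos ha)
  refine tendsto_of_tendsto_of_tendsto_of_le_of_le' hhalf hdouble ?_ ?_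
  · filter_upwards [hmem] with r ⟨hr0, hra⟩
    have hle := integral_div_id_le_mul_log_of_monotoneOn (x := 1 / 2 * r) (y := r) (by positivity)
      (by linarith) (hf.mono fun s hs => ⟨by linarith [hs.1], by linarith [hs.2]⟩)
    rw [show r / (1 / 2 * r) = 2 by field_simp] at hle
    exact (div_le_iff₀ hlog).2 hle
  · filter_upwards [hmem] with r ⟨hr0, hra⟩
    have hle := mul_log_le_integral_div_id_of_monotoneOn (y := 2 * r) hr0 (by linarith)
      (hf.mono fun s hs => ⟨by linarith [hs.1], by linarith [hs.2]⟩)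
    rw [mul_div_cancel_right₀ _ hr0.ne'] at hle
    exact (le_div_iff₀ hlog).2 hle

lemma le_of_monotoneOn_of_tendsto_nhdsGT {X Y : Type*} [LinearOrder X] [TopologicalSpace X]
    [OrderTopology X] [DenselyOrdered X] [Preorder Y] [TopologicalSpace Y] [ClosedIicTopology Y]
    {f : X → Y} {a b x : X} {L : Y} (hf : MonotoneOn f (Ioc a b))
    (hL : Tendsto f (𝓝[>] a) (𝓝 L)) (hx : x ∈ Ioc a b) : L ≤ f x := by
  have : (𝓝[>] a).NeBot := nhdsGT_neBot_of_exists_gt ⟨x, hx.1⟩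
  refine le_of_tendsto hL ?_
  filter_upwards [Ioc_mem_nhdsGT hx.1] with s hs
  exact hf ⟨hs.1, hs.2.trans hx.2⟩ hx hs.2

lemma eventually_one_add_lt_mul_log_sub {ι : Type*} {l : Filter ι} {u v : ι → ℝ} {C ρ : ℝ}
    (hρ : ρ ≠ 0) (hC : 1 < C * (ρ * Real.log ρ)) (hu : Tendsto u l (𝓝 0))
    (hv : Tendsto v l (𝓝 0)) :
    ∀ᶠ i in l, 1 + v i < C * ((ρ - u i) * Real.log (ρ - u i)) := by
  have hleft : Tendsto (fun i => 1 + v i) l (𝓝 1) := by simpa only [add_zero] using hv.const_add 1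
  have hsub : Tendsto (fun i => ρ - u i) l (𝓝 ρ) := by simpa only [sub_zero] using hu.const_sub ρ
  exact hleft.eventually_lt ((hsub.mul (hsub.log hρ)).const_mul C) hC

/-- The function `β(r) = C r ∫₀ʳ α(s)/s ds` bounding the cone-like region
`‖w‖ ≤ β(‖v‖)` that is to be invariant under a map with expansion rate `ρ` and nonlinearity of
size `α`. -/
noncomputable def diniProfile (C : ℝ) (α : ℝ → ℝ) (r : ℝ) : ℝ :=
  C * r * ∫ s in 0..r, α s / s

namespace diniProfile

variable {α : ℝ → ℝ} {C ρ a r : ℝ}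

lemma mul_add_le (hC : 0 ≤ C) (hr : 0 < r) (hαr : 0 ≤ α r) (ht : 1 ≤ ρ - α r)
    (hα : MonotoneOn α (Icc r (ρ * r - r * α r)))
    (hint : IntervalIntegrable (fun s => α s / s) volume 0 r)
    (hgain : 1 + C * ∫ s in 0..r, α s / s ≤ C * ((ρ - α r) * Real.log (ρ - α r))) :
    ρ * diniProfile C α r + r * α r ≤ diniProfile C α (ρ * r - r * α r) := by
  have hfactor : ρ * r - r * α r = (ρ - α r) * r := by ring
  rw [hfactor] at hα ⊢
  set t := ρ - α r with t_def
  have hrt : r ≤ t * r := le_mul_of_one_le_left hr.le ht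
  have hJ : (∫ s in 0..r, α s / s) + α r * Real.log t ≤ ∫ s in 0..t * r, α s / s := by
    have hlog := mul_log_le_integral_div_id_of_monotoneOn hr hrt hα
    rw [mul_div_cancel_right₀ _ hr.ne'] at hlog
    rw [← intervalIntegral.integral_add_adjacent_intervals hint (intervalIntegrable_div_id hr hrt
      (MonotoneOn.intervalIntegrable (by rwa [uIcc_of_le hrt])))]
    gcongr
  unfold diniProfile
  set J := ∫ s in 0..r, α s / s
  calc ρ * (C * r * J) + r * α r = C * (t * r) * J + r * α r * (1 + C * J) := by
        rw [t_def]; ring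
    _ ≤ C * (t * r) * J + r * α r * (C * (t * Real.log t)) := by gcongr
    _ = C * (t * r) * (J + α r * Real.log t) := by ring
    _ ≤ C * (t * r) * ∫ s in 0..t * r, α s / s := by gcongr

lemma eventually_le_self (ha : 0 < a)
    (hint : IntervalIntegrable (fun s => α s / s) volume 0 a) :
    ∀ᶠ r in 𝓝[>] 0, diniProfile C α r ≤ r := by
  have hCJ := (tendsto_intervalIntegral_nhdsGT_left ha hint).const_mul C
  rw [mul_zero] at hCJ
  filter_upwards [hCJ.eventually_le_const one_pos, self_mem_nhdsWithin] with r hCJr hr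
  calc diniProfile C α r = r * (C * ∫ s in 0..r, α s / s) := by unfold diniProfile; ring
    _ ≤ r := mul_le_of_le_one_right (mem_Ioi.1 hr).le hCJr

lemma eventually_mul_add_le (hρ : 1 < ρ) (ha : 0 < a) (hα : MonotoneOn α (Ioc 0 a))
    (hint : IntervalIntegrable (fun s => α s / s) volume 0 a)
    (hC : 1 / (ρ * Real.log ρ) < C) :
    ∀ᶠ r in 𝓝[>] 0, ρ * diniProfile C α r + r * α r ≤ diniProfile C α (ρ * r - r * α r) := by
  have hρ0 : 0 < ρ := one_pos.trans hρ
  have hρlog : 0 < ρ * Real.log ρ := mul_pos hρ0 (Real.log_pos hρ)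
  have hC0 : 0 < C := (one_div_pos.2 hρlog).trans hC
  have hα0 := tendsto_nhdsGT_zero_of_monotoneOn_of_intervalIntegrable_div_id ha hα hint
  have hCJ := (tendsto_intervalIntegral_nhdsGT_left ha hint).const_mul C
  rw [mul_zero] at hCJ
  filter_upwards [eventually_one_add_lt_mul_log_sub hρ0.ne' ((div_lt_iff₀ hρlog).1 hC) hα0 hCJ,
    hα0.eventually_le_const (sub_pos.2 hρ), Ioc_mem_nhdsGT (div_pos ha hρ0)]
    with r hgain hαr ⟨hr, hra⟩
  have hρr : ρ * r ≤ a := (le_div_iff₀' hρ0).1 hra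
  have hr_mem : r ∈ Ioc 0 a := ⟨hr, (le_mul_of_one_le_left hr.le hρ.le).trans hρr⟩
  have hαr0 : 0 ≤ α r := le_of_monotoneOn_of_tendsto_nhdsGT hα hα0 hr_mem
  have hle : ρ * r - r * α r ≤ a := (sub_le_self _ (mul_nonneg hr.le hαr0)).trans hρr
  exact mul_add_le hC0.le hr hαr0 (le_sub_comm.1 hαr)
    (hα.mono fun s hs => ⟨hr.trans_le hs.1, hs.2.trans hle⟩)
    (hint.mono_set (uIcc_subset_uIcc_left (Icc_subset_uIcc (Ioc_subset_Icc_self hr_mem))))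
    hgain.le

end diniProfile

/-- solvability of the functional inequality
`ρβ(r) + rα(r) ≤ β(ρr - rα(r))` with `β(r) = C r ∫₀^r α(s)/s ds`,
`C > 1/(ρ ln ρ)`, under the integrability condition on `α`. -/
theorem stmt_16 (ρ a C : ℝ) (hρ : 1 < ρ) (ha : 0 < a)
    (α : ℝ → ℝ) (hα_mono : MonotoneOn α (Set.Icc 0 a))
    (hα_nonneg : ∀ s ∈ Set.Icc (0 : ℝ) a, 0 ≤ α s)
    (hα_int : IntegrableOn (fun s => α s / s) (Set.Ioc 0 a))
    (hC : 1 / (ρ * Real.log ρ) < C)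
    (β : ℝ → ℝ)
    (hβ : ∀ r ∈ Set.Icc (0 : ℝ) a, β r = C * r * ∫ s in Set.Ioc (0 : ℝ) r, α s / s) :
    ∃ r₀ ∈ Set.Ioc (0 : ℝ) (a / ρ), ∀ r ∈ Set.Icc (0 : ℝ) r₀,
      β r ≤ r ∧ ρ * β r + r * α r ≤ β (ρ * r - r * α r) := by
  have hρ0 : 0 < ρ := one_pos.trans hρ
  have hα : MonotoneOn α (Ioc 0 a) := hα_mono.mono Ioc_subset_Icc_self
  have hint := (intervalIntegrable_iff_integrableOn_Ioc_of_le ha.le).2 hα_int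
  have hα0 := tendsto_nhdsGT_zero_of_monotoneOn_of_intervalIntegrable_div_id ha hα hint
  have hβ_eq : ∀ r ∈ Icc 0 a, β r = diniProfile C α r := fun r hr => by
    rw [hβ r hr, diniProfile, intervalIntegral.integral_of_le hr.1]
  obtain ⟨u, hu, hsmall⟩ := mem_nhdsGT_iff_exists_Ioc_subset.1
    ((hα0.eventually_le_const hρ0).and ((diniProfile.eventually_le_self (C := C) ha hint).and
      (diniProfile.eventually_mul_add_le hρ ha hα hint hC)))
  refine ⟨min u (a / ρ), ⟨lt_min hu (div_pos ha hρ0), min_le_right _ _⟩, fun r ⟨hr, hr_le⟩ => ?_⟩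
  obtain ⟨hru, hra⟩ := le_min_iff.1 hr_le
  rcases hr.eq_or_lt with rfl | hr0
  · simp [hβ 0 ⟨le_rfl, ha.le⟩]
  obtain ⟨hαρ, hle_self, hmul_add_le⟩ := hsmall ⟨hr0, hru⟩
  have hρr : ρ * r ≤ a := (le_div_iff₀' hρ0).1 hra
  have hr_mem : r ∈ Icc 0 a := ⟨hr, (le_mul_of_one_le_left hr hρ.le).trans hρr⟩
  have himage_mem : ρ * r - r * α r ∈ Icc 0 a :=
    ⟨sub_nonneg.2 (by rw [mul_comm]; exact mul_le_mul_of_nonneg_right hαρ hr),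
      (sub_le_self _ (mul_nonneg hr (hα_nonneg r hr_mem))).trans hρr⟩
  rw [hβ_eq r hr_mem, hβ_eq _ himage_mem]
  exact ⟨hle_self, hmul_add_le⟩
end

section
/- Let ρ > 1, let r₀ > 0, let α : [0,r₀] → [0,∞) be nondecreasing, and let β : [0, ρr₀] → [0,∞) be a nondecreasing continuous function with β(r) ≤ r for r ∈ [0, ρr₀] which satisfies ρ·β(r) + r·α(r) ≤ β(ρr) for all r ∈ [0, r₀]. Then ∫₀^{r₀} α(r)/r dr < ∞. -/
open MeasureTheory

/-!
Along the geometric sequence `aₙ = r₀ / ρⁿ`, dividing the inequality at `aₙ` by `aₙ` gives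
`α(aₙ) ≤ uₙ - uₙ₊₁` with `uₙ = β(ρ aₙ) / aₙ ≥ 0`, so `∑ α(aₙ)` telescopes and converges. As `α` is
nondecreasing and `dr / r` gives the same mass to every `(aₙ₊₁, aₙ]`, this sum controls
`∫ α(r) / r dr`: a continuous analogue of Cauchy condensation.
-/

lemma summable_of_le_sub_succ {g u : ℕ → ℝ} (hg : ∀ n, 0 ≤ g n) (hu : ∀ n, 0 ≤ u n)
    (h : ∀ n, g n ≤ u n - u (n + 1)) : Summable g :=
  summable_of_sum_range_le hg fun n ↦ calc
    ∑ i ∈ Finset.range n, g i ≤ ∑ i ∈ Finset.range n, (u i - u (i + 1)) :=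
      Finset.sum_le_sum fun i _ ↦ h i
    _ = u 0 - u n := Finset.sum_range_sub' u n
    _ ≤ u 0 := sub_le_self _ (hu n)

section MonotoneOn

variable {f : ℝ → ℝ} {a b : ℝ}

lemma integrableOn_div_id_of_monotoneOn (ha : 0 < a) (hf : MonotoneOn f (Set.Icc a b)) :
    IntegrableOn (fun r ↦ f r / r) (Set.Icc a b) := by
  have hinv : ContinuousOn (fun r : ℝ ↦ r⁻¹) (Set.Icc a b) :=
    continuousOn_inv₀.mono fun r hr ↦ (ha.trans_le hr.1).ne'
  simpa only [div_eq_mul_inv] using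
    (hf.integrableOn_isCompact isCompact_Icc).mul_continuousOn hinv isCompact_Icc

lemma setIntegral_norm_div_id_le_of_monotoneOn (ha : 0 < a) (hab : a ≤ b)
    (hf : MonotoneOn f (Set.Icc a b)) (hfa : 0 ≤ f a) :
    ∫ r in Set.Ioc a b, ‖f r / r‖ ≤ f b / a * (b - a) := by
  have hbound : ∀ r ∈ Set.Ioc a b, ‖‖f r / r‖‖ ≤ f b / a := fun r hr ↦ by
    have hr' : r ∈ Set.Icc a b := Set.Ioc_subset_Icc_self hr
    have hfr : 0 ≤ f r := hfa.trans (hf (Set.left_mem_Icc.2 hab) hr' hr'.1)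
    have hfb : f r ≤ f b := hf hr' (Set.right_mem_Icc.2 hab) hr'.2
    rw [norm_norm, Real.norm_of_nonneg (div_nonneg hfr (ha.trans hr.1).le)]
    exact div_le_div₀ (hfr.trans hfb) hfb ha hr.1.le
  calc ∫ r in Set.Ioc a b, ‖f r / r‖ ≤ ‖∫ r in Set.Ioc a b, ‖f r / r‖‖ := Real.le_norm_self _
    _ ≤ f b / a * volume.real (Set.Ioc a b) :=
      norm_setIntegral_le_of_norm_le_const measure_Ioc_lt_top hbound
    _ = f b / a * (b - a) := by rw [Real.volume_real_Ioc_of_le hab]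

end MonotoneOn

section GeometricSequence

lemma mul_div_pow_succ {G : Type*} [CommGroupWithZero G] {ρ : G} (hρ : ρ ≠ 0) (b : G) (n : ℕ) :
    ρ * (b / ρ ^ (n + 1)) = b / ρ ^ n := by
  rw [pow_succ', ← mul_div_assoc, mul_div_mul_left _ _ hρ]

variable {K : Type*} [Field K] [LinearOrder K] [IsStrictOrderedRing K] {ρ b : K}

lemma div_pow_mem_Ioc (hρ : 1 ≤ ρ) (hb : 0 < b) (n : ℕ) : b / ρ ^ n ∈ Set.Ioc 0 b :=
  ⟨by positivity, div_le_self hb.le (one_le_pow₀ hρ)⟩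

lemma Ioc_subset_iUnion_Ioc_div_pow [Archimedean K] (hρ : 1 < ρ) (b : K) :
    Set.Ioc 0 b ⊆ ⋃ n : ℕ, Set.Ioc (b / ρ ^ (n + 1)) (b / ρ ^ n) := by
  rintro r ⟨hr, hrb⟩
  have hρ₀ : 0 < ρ := zero_lt_one.trans hρ
  obtain ⟨n, hn, hn'⟩ := exists_nat_pow_near ((one_le_div₀ hr).2 hrb) hρ
  exact Set.mem_iUnion.2 ⟨n, (div_lt_comm₀ hr (pow_pos hρ₀ _)).1 hn',
    (le_div_comm₀ (pow_pos hρ₀ _) hr).1 hn⟩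

end GeometricSequence

lemma integrableOn_div_id_of_summable_div_pow {f : ℝ → ℝ} {ρ b : ℝ} (hρ : 1 < ρ) (hb : 0 < b)
    (hf : MonotoneOn f (Set.Ioc 0 b)) (hf₀ : ∀ r ∈ Set.Ioc 0 b, 0 ≤ f r)
    (hsum : Summable fun n : ℕ ↦ f (b / ρ ^ n)) :
    IntegrableOn (fun r ↦ f r / r) (Set.Ioc 0 b) := by
  let a : ℕ → ℝ := fun n ↦ b / ρ ^ n
  have ha (n : ℕ) : a n ∈ Set.Ioc 0 b := div_pow_mem_Ioc hρ.le hb n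
  have ha_succ (n : ℕ) : ρ * a (n + 1) = a n := mul_div_pow_succ (zero_lt_one.trans hρ).ne' b n
  have ha_le (n : ℕ) : a (n + 1) ≤ a n :=
    ha_succ n ▸ le_mul_of_one_le_left (ha (n + 1)).1.le hρ.le
  have hf_piece (n : ℕ) : MonotoneOn f (Set.Icc (a (n + 1)) (a n)) :=
    hf.mono fun r hr ↦ ⟨(ha (n + 1)).1.trans_le hr.1, hr.2.trans (ha n).2⟩
  have hint_le (n : ℕ) :
      ∫ r in Set.Ioc (a (n + 1)) (a n), ‖f r / r‖ ≤ (ρ - 1) * f (a n) := calc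
    _ ≤ f (a n) / a (n + 1) * (a n - a (n + 1)) :=
      setIntegral_norm_div_id_le_of_monotoneOn (ha (n + 1)).1 (ha_le n) (hf_piece n)
        (hf₀ _ (ha (n + 1)))
    _ = (ρ - 1) * f (a n) := by
      have ha_ne : a (n + 1) ≠ 0 := (ha (n + 1)).1.ne'
      rw [← ha_succ n]
      field_simp
  have hsum_int : Summable fun n ↦ ∫ r in Set.Ioc (a (n + 1)) (a n), ‖f r / r‖ :=
    .of_nonneg_of_le (fun n ↦ integral_nonneg fun r ↦ norm_nonneg _) hint_le
      (hsum.mul_left (ρ - 1))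
  have hint (n : ℕ) : IntegrableOn (fun r ↦ f r / r) (Set.Ioc (a (n + 1)) (a n)) :=
    (integrableOn_div_id_of_monotoneOn (ha (n + 1)).1 (hf_piece n)).mono_set
      Set.Ioc_subset_Icc_self
  exact (integrableOn_iUnion_of_summable_integral_norm hint hsum_int).mono_set
    (Ioc_subset_iUnion_Ioc_div_pow hρ b)

lemma summable_div_pow_of_mul_add_mul_le {α β : ℝ → ℝ} {ρ b : ℝ} (hρ : 1 ≤ ρ) (hb : 0 < b)
    (hα : ∀ r ∈ Set.Ioc 0 b, 0 ≤ α r) (hβ : ∀ r ∈ Set.Ioc 0 (ρ * b), 0 ≤ β r)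
    (hineq : ∀ r ∈ Set.Ioc 0 b, ρ * β r + r * α r ≤ β (ρ * r)) :
    Summable fun n : ℕ ↦ α (b / ρ ^ n) := by
  have hρ₀ : 0 < ρ := zero_lt_one.trans_le hρ
  let a : ℕ → ℝ := fun n ↦ b / ρ ^ n
  have ha (n : ℕ) : a n ∈ Set.Ioc 0 b := div_pow_mem_Ioc hρ hb n
  have ha_succ (n : ℕ) : ρ * a (n + 1) = a n := mul_div_pow_succ hρ₀.ne' b n
  refine summable_of_le_sub_succ (u := fun n ↦ β (ρ * a n) / a n) (fun n ↦ hα _ (ha n))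
    (fun n ↦ div_nonneg (hβ _ ?_) (ha n).1.le) fun n ↦ ?_
  · exact ⟨mul_pos hρ₀ (ha n).1, mul_le_mul_of_nonneg_left (ha n).2 hρ₀.le⟩
  · have hquot : β (ρ * a (n + 1)) / a (n + 1) = ρ * β (a n) / a n := by
      rw [ha_succ, ← mul_div_mul_left _ _ hρ₀.ne', ha_succ]
    calc α (a n) ≤ (β (ρ * a n) - ρ * β (a n)) / a n := by
          rw [le_div_iff₀' (ha n).1]
          exact le_sub_iff_add_le'.2 (hineq _ (ha n))
      _ = β (ρ * a n) / a n - β (ρ * a (n + 1)) / a (n + 1) := by rw [hquot, sub_div]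

theorem stmt_17_general {ρ r₀ : ℝ} (hρ : 1 < ρ) (hr₀ : 0 < r₀) {α β : ℝ → ℝ}
    (hα_mono : MonotoneOn α (Set.Ioc 0 r₀)) (hα_nonneg : ∀ r ∈ Set.Ioc 0 r₀, 0 ≤ α r)
    (hβ_nonneg : ∀ r ∈ Set.Ioc 0 (ρ * r₀), 0 ≤ β r)
    (hineq : ∀ r ∈ Set.Ioc 0 r₀, ρ * β r + r * α r ≤ β (ρ * r)) :
    IntegrableOn (fun r ↦ α r / r) (Set.Ioc 0 r₀) :=
  integrableOn_div_id_of_summable_div_pow hρ hr₀ hα_mono hα_nonneg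
    (summable_div_pow_of_mul_add_mul_le hρ.le hr₀ hα_nonneg hβ_nonneg hineq)

/-- necessity of the integrability condition: if a nondecreasing
continuous `β` with `0 ≤ β(r) ≤ r` satisfies `ρβ(r) + rα(r) ≤ β(ρr)` on `[0,r₀]`,
then `∫₀^{r₀} α(r)/r dr < ∞`. -/
theorem stmt_17 (ρ r₀ : ℝ) (hρ : 1 < ρ) (hr₀ : 0 < r₀)
    (α : ℝ → ℝ) (hα_mono : MonotoneOn α (Set.Icc 0 r₀))
    (hα_nonneg : ∀ r ∈ Set.Icc (0 : ℝ) r₀, 0 ≤ α r)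
    (β : ℝ → ℝ) (hβ_mono : MonotoneOn β (Set.Icc 0 (ρ * r₀)))
    (hβ_cont : ContinuousOn β (Set.Icc 0 (ρ * r₀)))
    (hβ_nonneg : ∀ r ∈ Set.Icc (0 : ℝ) (ρ * r₀), 0 ≤ β r)
    (hβ_le : ∀ r ∈ Set.Icc (0 : ℝ) (ρ * r₀), β r ≤ r)
    (hineq : ∀ r ∈ Set.Icc (0 : ℝ) r₀, ρ * β r + r * α r ≤ β (ρ * r)) :
    IntegrableOn (fun r => α r / r) (Set.Ioc 0 r₀) := by
  have hsub (c : ℝ) : Set.Ioc 0 c ⊆ Set.Icc 0 c := Set.Ioc_subset_Icc_self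
  exact stmt_17_general hρ hr₀ (hα_mono.mono (hsub _)) (fun r hr ↦ hα_nonneg r (hsub _ hr))
    (fun r hr ↦ hβ_nonneg r (hsub _ hr)) fun r hr ↦ hineq r (hsub _ hr)
end

section
/- Consider the two-dimensional discrete system v_{n+1} = v_n + w_n − v_n³, w_{n+1} = w_n − w_n³. If |v₀| ≤ 1/2 and |w₀| ≤ 1/8, then the solution satisfies |v_n| ≤ max(|v₀|, |w₀|^{1/3}) and |w_n| ≤ |w₀| for all n ∈ ℕ, and moreover |v_n| + |w_n| → 0 as n → ∞. -/
/-!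
Since `x ↦ x - x ^ p` is increasing on `[0, r]` when `p * r ^ (p - 1) ≤ 1`, a bound `|x| ≤ M ≤ r`
survives the step `x ↦ x - x ^ p + e` as soon as `|e| ≤ M ^ p`. The absolute value of the
iterates then loses `|x| ^ p` at each step, up to `|e|`, so the iterates vanish in the limit if the
perturbation `e` does. This applies to `w`, with `e = 0` and `M = |w 0|`, and then to `v`, with
`e = w` and the least `M ≥ |v 0|` such that `|w 0| ≤ M ^ p`.
-/

open Filter Set Topology

section Algebra

variable {R : Type*} [CommRing R] [LinearOrder R] [IsOrderedRing R] {p : ℕ} {r x : R}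

lemma monotoneOn_sub_pow (hr : p * r ^ (p - 1) ≤ 1) :
    MonotoneOn (fun x : R => x - x ^ p) (Icc 0 r) := by
  rintro x ⟨hx₀, -⟩ y ⟨hy₀, hyr⟩ hxy
  have hsub : 0 ≤ y - x := sub_nonneg.2 hxy
  have hpow : y ^ p - x ^ p ≤ y - x := calc
    y ^ p - x ^ p ≤ |y - x| * p * max |y| |x| ^ (p - 1) :=
      (le_abs_self _).trans (abs_pow_sub_pow_le ..)
    _ = (y - x) * (p * y ^ (p - 1)) := by
      rw [abs_of_nonneg hsub, abs_of_nonneg hx₀, abs_of_nonneg hy₀, max_eq_left hxy, mul_assoc]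
    _ ≤ (y - x) * (p * r ^ (p - 1)) := by gcongr
    _ ≤ y - x := mul_le_of_le_one_right hsub hr
  exact sub_le_sub_iff.2 (by rwa [add_comm x, ← sub_le_sub_iff])

lemma abs_sub_pow_of_odd (hp : Odd p) (hx : |x| ^ p ≤ |x|) : |x - x ^ p| = |x| - |x| ^ p := by
  rw [← abs_of_nonneg (sub_nonneg.2 hx)]
  obtain h | h := abs_choice x
  · rw [h]
  · rw [h, hp.neg_pow, ← neg_sub', abs_neg]

lemma pow_le_self_of_mul_pow_le_one (hp : p ≠ 0) (hr : p * r ^ (p - 1) ≤ 1) (hx₀ : 0 ≤ x)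
    (hxr : x ≤ r) : x ^ p ≤ x := by
  have hr₀ : 0 ≤ r := hx₀.trans hxr
  simpa [hp] using monotoneOn_sub_pow hr ⟨le_rfl, hr₀⟩ ⟨hx₀, hxr⟩ hx₀

end Algebra

lemma eventually_le_of_le_max_sub {G : Type*} [AddCommGroup G] [LinearOrder G]
    [IsOrderedAddMonoid G] [Archimedean G] {a : ℕ → G} {c δ : G} (hδ : 0 < δ)
    (ha : ∀ᶠ n in atTop, a (n + 1) ≤ max c (a n - δ)) : ∀ᶠ n in atTop, a n ≤ c := by
  obtain ⟨N, hN⟩ := eventually_atTop.1 ha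
  have hdescent (k : ℕ) : a (N + k) ≤ max c (a N - k • δ) := by
    induction k with
    | zero => simp
    | succ k ih => calc
        a (N + k + 1) ≤ max c (a (N + k) - δ) := hN _ (N.le_add_right k)
        _ ≤ max c (max c (a N - k • δ) - δ) := by gcongr
        _ ≤ max c (a N - (k + 1) • δ) := by
          rw [← max_sub_sub_right, ← max_assoc, max_eq_left (sub_le_self c hδ.le), sub_sub,
            succ_nsmul]
  obtain ⟨K, hK⟩ := Archimedean.arch (a N - c) hδ
  filter_upwards [eventually_ge_atTop (N + K)] with n hn
  obtain ⟨k, rfl⟩ := Nat.exists_eq_add_of_le (le_of_add_le_left hn)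
  have hKk : K • δ ≤ k • δ := nsmul_le_nsmul_left hδ.le (Nat.le_of_add_le_add_left hn)
  exact (hdescent k).trans (max_le le_rfl (sub_le_comm.1 (hK.trans hKk)))

lemma tendsto_zero_of_le_sub_add {a b : ℕ → ℝ} {g : ℝ → ℝ} (hg : MonotoneOn g (Ici 0))
    (hg₀ : 0 ≤ g 0) (hg_pos : ∀ x, 0 < x → 0 < g x) (ha : ∀ n, 0 ≤ a n)
    (hab : ∀ n, a (n + 1) ≤ a n - g (a n) + b n) (hb : Tendsto b atTop (𝓝 0)) :
    Tendsto a atTop (𝓝 0) := by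
  have hsmall (ε : ℝ) (hε : 0 < ε) : ∀ᶠ n in atTop, a n ≤ 2 * ε := by
    have hgε := hg_pos ε hε
    have hδ : 0 < min ε (g ε / 2) := lt_min hε (half_pos hgε)
    refine eventually_le_of_le_max_sub hδ ?_
    filter_upwards [hb.eventually_le_const hδ] with n hbn
    have hδε : min ε (g ε / 2) ≤ ε := min_le_left ..
    have hδg : min ε (g ε / 2) ≤ g ε / 2 := min_le_right ..
    obtain hlt | hge := lt_or_ge (a n) ε
    · have hgn : 0 ≤ g (a n) := hg₀.trans (hg self_mem_Ici (ha n) (ha n))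
      exact le_max_of_le_left (by linarith [hab n])
    · have hgn : g ε ≤ g (a n) := hg hε.le (ha n) hge
      exact le_max_of_le_right (by linarith [hab n])
  refine tendsto_order.2 ⟨fun c hc => .of_forall fun n => hc.trans_le (ha n), fun c hc => ?_⟩
  filter_upwards [hsmall (c / 3) (by positivity)] with n hn
  linarith

section PerturbedIteration

variable {u e : ℕ → ℝ} {p : ℕ} {r : ℝ}

lemma abs_le_add_of_eq_add_sub_pow (hp : Odd p) (hr : p * r ^ (p - 1) ≤ 1)
    (hu : ∀ n, u (n + 1) = u n + e n - u n ^ p) {n : ℕ} (hn : |u n| ≤ r) :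
    |u (n + 1)| ≤ |u n| - |u n| ^ p + |e n| := by
  have hpow := pow_le_self_of_mul_pow_le_one hp.pos.ne' hr (abs_nonneg _) hn
  rw [hu, ← abs_sub_pow_of_odd hp hpow, add_sub_right_comm]
  exact abs_add_le _ _

lemma abs_le_of_eq_add_sub_pow (hp : Odd p) (hr : p * r ^ (p - 1) ≤ 1)
    (hu : ∀ n, u (n + 1) = u n + e n - u n ^ p) (hu₀ : |u 0| ≤ r) (he : ∀ n, |e n| ≤ r ^ p)
    (n : ℕ) : |u n| ≤ r := by
  induction n with
  | zero => exact hu₀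
  | succ n ih => calc
      |u (n + 1)| ≤ |u n| - |u n| ^ p + |e n| := abs_le_add_of_eq_add_sub_pow hp hr hu ih
      _ ≤ r - r ^ p + r ^ p := by
        have hr₀ : 0 ≤ r := (abs_nonneg _).trans ih
        exact add_le_add (monotoneOn_sub_pow hr ⟨abs_nonneg _, ih⟩ ⟨hr₀, le_rfl⟩ ih) (he n)
      _ = r := sub_add_cancel ..

lemma tendsto_zero_of_eq_add_sub_pow (hp : Odd p) (hr : p * r ^ (p - 1) ≤ 1)
    (hu : ∀ n, u (n + 1) = u n + e n - u n ^ p) (hur : ∀ n, |u n| ≤ r)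
    (he : Tendsto e atTop (𝓝 0)) : Tendsto u atTop (𝓝 0) := by
  refine (tendsto_zero_iff_abs_tendsto_zero u).2 ?_
  refine tendsto_zero_of_le_sub_add (g := fun x => x ^ p) (hp.strictMono_pow.monotone.monotoneOn _)
    (pow_nonneg le_rfl p) (fun x hx => pow_pos hx p) (fun n => abs_nonneg (u n))
    (fun n => abs_le_add_of_eq_add_sub_pow hp hr hu (hur n)) ?_
  exact (tendsto_zero_iff_abs_tendsto_zero e).1 he

end PerturbedIteration

theorem stmt_18_general {p : ℕ} (hp : Odd p) {r : ℝ} (hr : p * r ^ (p - 1) ≤ 1) (v w : ℕ → ℝ)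
    (hv : ∀ n, v (n + 1) = v n + w n - v n ^ p) (hw : ∀ n, w (n + 1) = w n - w n ^ p)
    (hv₀ : |v 0| ≤ r) (hw₀ : |w 0| ≤ r ^ p) :
    (∀ n : ℕ, |v n| ≤ max |v 0| (|w 0| ^ ((1 : ℝ) / p)) ∧ |w n| ≤ |w 0|) ∧
    Tendsto (fun n => |v n| + |w n|) atTop (𝓝 0) := by
  set M := max |v 0| (|w 0| ^ ((1 : ℝ) / p))
  have hp₀ : p ≠ 0 := hp.pos.ne'
  have hr₀ : 0 ≤ r := (abs_nonneg _).trans hv₀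
  have hroot : (|w 0| ^ ((1 : ℝ) / p)) ^ p = |w 0| := by
    rw [one_div, Real.rpow_inv_natCast_pow (abs_nonneg _) hp₀]
  have hMr : M ≤ r := max_le hv₀ (le_of_pow_le_pow_left₀ hp₀ hr₀ (hroot.trans_le hw₀))
  have hwM : |w 0| ≤ M ^ p := hroot.ge.trans (by gcongr; exact le_max_right ..)
  have hw₀r : |w 0| ≤ r := hw₀.trans (pow_le_self_of_mul_pow_le_one hp₀ hr hr₀ le_rfl)
  have hradius {x : ℝ} (hx : 0 ≤ x) (hxr : x ≤ r) : p * x ^ (p - 1) ≤ 1 :=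
    le_trans (by gcongr) hr
  have hw' (n : ℕ) : w (n + 1) = w n + 0 - w n ^ p := by rw [hw, add_zero]
  have hw_le := abs_le_of_eq_add_sub_pow hp (hradius (abs_nonneg _) hw₀r) hw' le_rfl
    fun _ => by simp
  have hv_le := abs_le_of_eq_add_sub_pow hp (hradius (by positivity) hMr) hv (le_max_left ..)
    fun n => (hw_le n).trans hwM
  have hw_lim := tendsto_zero_of_eq_add_sub_pow hp hr hw' (fun n => (hw_le n).trans hw₀r)
    tendsto_const_nhds
  have hv_lim := tendsto_zero_of_eq_add_sub_pow hp hr hv (fun n => (hv_le n).trans hMr) hw_lim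
  exact ⟨fun n => ⟨hv_le n, hw_le n⟩, by simpa using hv_lim.abs.add hw_lim.abs⟩

/-- for the system `v_{n+1} = v_n + w_n - v_n³`,
`w_{n+1} = w_n - w_n³` with `|v₀| ≤ 1/2` and `|w₀| ≤ 1/8`, one has
`|v_n| ≤ max(|v₀|, |w₀|^{1/3})`, `|w_n| ≤ |w₀|` for all `n`, and
`|v_n| + |w_n| → 0`. -/
theorem stmt_18 (v w : ℕ → ℝ)
    (hv : ∀ n, v (n + 1) = v n + w n - (v n) ^ 3)
    (hw : ∀ n, w (n + 1) = w n - (w n) ^ 3)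
    (hv0 : |v 0| ≤ 1 / 2) (hw0 : |w 0| ≤ 1 / 8) :
    (∀ n : ℕ, |v n| ≤ max |v 0| (|w 0| ^ ((1 : ℝ) / 3)) ∧ |w n| ≤ |w 0|) ∧
    Filter.Tendsto (fun n => |v n| + |w n|) Filter.atTop (nhds 0) := by
  exact_mod_cast stmt_18_general (p := 3) (by decide) (r := 1 / 2) (by norm_num) v w hv hw hv0
    (by norm_num at hw0 ⊢; exact hw0)
end
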